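/- arXiv:1102.2460 — 6 statements merged into one kernel-verified Lean document; each statement's English description precedes it below -/
import Mathlib

section
/- For every n ≥ 1 and all k, ℓ with 1 ≤ k, ℓ ≤ n, the elements ν_{(k,1^{n−k})} and ν_{(ℓ,1^{n−ℓ})} commute in the group algebra ℤ[S_n]; equivalently, for every w ∈ S_n one has Σ_{(u,v): u·v = w} noninv_k(u)·noninv_ℓ(v) = Σ_{(u,v): u·v = w} noninv_ℓ(u)·noninv_k(v). -/
/-!
Write a permutation as a word in the alphabet `{1, …, n}`, and consider the operators that insert a
letter (`U_a`), delete a letter (`D_a`) or replace a letter (`E_{ba}`: one `a` becomes `b`). Put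
`X_k = ∑ U_{a₁} ⋯ U_{a_k} D_{a_k} ⋯ D_{a₁}`, summed over all `k`-tuples of letters. The entry of
`X_k` between two permutation words `σ`, `τ` is `k!` times the number of their common subwords of length
`n - k`, that is `k! · noninv_{n-k}(σ⁻¹τ)`; so on permutation words `X_k` is right multiplication by
`k! · ν_{(n-k,1^k)}`, and it suffices that the `X_k` commute. This holds on the span of all words.

With `H` the length operator, the operators satisfy the relations
`[D_c, U_a] = δ_{ac} (H + 1) + E_{ac}`, `[E_{ba}, U_c] = δ_{ac} U_b`, `[E_{ba}, D_c] = -δ_{bc} D_a`,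
and the `D_a` commute with each other. The `X_k` commute with every `E_{ba}` and with `H`, and
moving a deletion through `X_{k+1}` gives (`del_X`)
`D_c X_{k+1} = P_k D_c + Q_k G_c`, with `P_k = X_{k+1} + (k+1) X_k (H + 1 - k)`, `Q_k = (k+1) X_k`
and `G_c = ∑_b E_{bc} D_b`. The same recursion holds for `G_c` in place of `D_c`, with
`∑_b E_{bc} G_b` in place of `G_c` on the right. Hence in `D_c X_{k+1} X_{l+1}` all coefficients
are polynomials in the `X_j` and `H`, acting on shorter words, where the `X_j` commute by
induction; the result is symmetric in `k` and `l`. So every `D_c` kills the image of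
`C = [X_{k+1}, X_{l+1}]`, whence `C² = 0`. As `U_a` is the transpose of `D_a`, the `X_k` are
symmetric and `C` is antisymmetric, so `C² = 0` forces `C = 0` (`X_comm_of_mem`).
-/

/-- `noninv n k w` is the number of `k`-element subsets
`{i₁ < i₂ < ⋯ < i_k}` of `{1,…,n}` with `w i₁ < w i₂ < ⋯ < w i_k`. -/
def noninv (n k : ℕ) (w : Equiv.Perm (Fin n)) : ℕ :=
  ((Finset.powersetCard k (Finset.univ : Finset (Fin n))).filter
    (fun s => ∀ a ∈ s, ∀ b ∈ s, a < b → w a < w b)).card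

/-- `ν_{(k,1^{n-k})} = Σ_{w ∈ S_n} noninv_k(w)·w` as an element of `ℤ[S_n]`. -/
noncomputable def nu (n k : ℕ) : MonoidAlgebra ℤ (Equiv.Perm (Fin n)) :=
  ∑ w : Equiv.Perm (Fin n), MonoidAlgebra.single w (noninv n k w : ℤ)

set_option linter.unusedSectionVars false

namespace NuCommute

open Finsupp

/-- The free `ℤ`-module on all words (repeated letters allowed) over the alphabet `α`. -/
abbrev Words (α : Type*) := List α →₀ ℤ

/-! ### Insertion, deletion and replacement of letters -/

section Operators

variable {α : Type*}

/-- The basis vector of `Words α` given by the word `w`. -/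
noncomputable abbrev word (w : List α) : Words α := single w 1

theorem end_ext {f g : Module.End ℤ (Words α)} (h : ∀ w, f (word w) = g (word w)) : f = g := by
  refine Finsupp.lhom_ext' fun w => LinearMap.ext_ring ?_
  exact h w

/-- Prepending the letter `x`. -/
noncomputable def consL (x : α) : Module.End ℤ (Words α) := Finsupp.lmapDomain ℤ ℤ (List.cons x)

/-- The sum of all words obtained from a word by inserting `b` at some position. -/
noncomputable def insW (b : α) : List α → Words α
  | [] => word [b]
  | x :: w => word (b :: x :: w) + consL x (insW b w)

/-- The insertion operator `U_b`. -/
noncomputable def insL (b : α) : Module.End ℤ (Words α) := linearCombination ℤ (insW b)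
/-- The operator `H` multiplying each word by its length. -/
noncomputable def lenL : Module.End ℤ (Words α) :=
  linearCombination ℤ fun w => (w.length : ℤ) • word w

theorem consL_word (x : α) (w : List α) : consL x (word w) = word (x :: w) := by
  simp [consL, word]

theorem insL_nil (b : α) : insL b (word []) = word [b] := by simp [insL, insW, word]
theorem lenL_word (w : List α) : lenL (word w) = (w.length : ℤ) • word w := by
  simp [lenL, word]

theorem insL_cons (b x : α) (y : Words α) :
    insL b (consL x y) = consL b (consL x y) + consL x (insL b y) := by
  suffices h : insL b * consL x = consL b * consL x + consL x * insL b from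
    LinearMap.congr_fun h y
  refine end_ext fun w => ?_
  simp only [Module.End.mul_apply, LinearMap.add_apply, consL_word]
  simp [insL, insW, word]

theorem lenL_cons (x : α) (y : Words α) :
    lenL (consL x y) = consL x y + consL x (lenL y) := by
  suffices h : lenL * consL x = consL x + consL x * lenL from LinearMap.congr_fun h y
  refine end_ext fun w => ?_
  simp only [Module.End.mul_apply, LinearMap.add_apply, consL_word, lenL_word, map_smul,
    List.length_cons]
  push_cast
  rw [add_smul, one_smul, add_comm]

theorem lenL_nil : lenL (word ([] : List α)) = 0 := by simp [lenL_word]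

/-- An identity between operators holds if it holds on the empty word and is preserved by
prepending a letter. -/
theorem end_ext_cons {f g : Module.End ℤ (Words α)} (h0 : f (word []) = g (word []))
    (h : ∀ x y, f y = g y → f (consL x y) = g (consL x y)) : f = g := by
  refine end_ext fun w => ?_
  induction w with
  | nil => exact h0
  | cons x w ih => rw [← consL_word]; exact h x _ ih

theorem len_ins (a : α) : lenL * insL a = insL a * lenL + insL a := by
  refine end_ext_cons ?_ fun x y ih => ?_
  · simp [insL_nil, lenL_word]
  · simp only [Module.End.mul_apply, LinearMap.add_apply] at ih ⊢
    simp only [insL_cons, lenL_cons, map_add, ih]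
    abel

variable [DecidableEq α]

/-- The sum of all words obtained from a word by deleting one occurrence of `a`. -/
noncomputable def delW (a : α) : List α → Words α
  | [] => 0
  | x :: w => (if a = x then word w else 0) + consL x (delW a w)

/-- The sum of all words obtained from a word by replacing one occurrence of `a` by `b`. -/
noncomputable def replW (b a : α) : List α → Words α
  | [] => 0
  | x :: w => (if a = x then word (b :: w) else 0) + consL x (replW b a w)

/-- The deletion operator `D_a`. -/
noncomputable def delL (a : α) : Module.End ℤ (Words α) := linearCombination ℤ (delW a)
/-- The replacement operator `E_{ba}`, turning one `a` into `b`. -/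
noncomputable def replL (b a : α) : Module.End ℤ (Words α) := linearCombination ℤ (replW b a)
theorem delL_nil (b : α) : delL b (word []) = 0 := by simp [delL, delW, word]
theorem replL_nil (b a : α) : replL b a (word []) = 0 := by simp [replL, replW, word]

theorem delL_cons (a x : α) (y : Words α) :
    delL a (consL x y) = (if a = x then y else 0) + consL x (delL a y) := by
  suffices h : delL a * consL x = (if a = x then 1 else 0) + consL x * delL a by
    have := LinearMap.congr_fun h y
    split_ifs at this ⊢ <;> simpa using this
  refine end_ext fun w => ?_
  simp only [Module.End.mul_apply, LinearMap.add_apply, consL_word]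
  split_ifs with h <;> simp [delL, delW, word, h]

theorem replL_cons (b a x : α) (y : Words α) :
    replL b a (consL x y) = (if a = x then consL b y else 0) + consL x (replL b a y) := by
  suffices h : replL b a * consL x = (if a = x then consL b else 0) + consL x * replL b a by
    have := LinearMap.congr_fun h y
    split_ifs at this ⊢ <;> simpa using this
  refine end_ext fun w => ?_
  simp only [Module.End.mul_apply, LinearMap.add_apply, consL_word]
  split_ifs with h <;> simp [replL, replW, word, h, consL]

/-- Inserting `a` and then deleting `c` differs from the opposite order in two ways. The freshly
inserted letter may be the deleted one, which gives `H + 1` when `a = c`; and inserting `a` on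
either side of the deleted `c` gives the same word twice, which gives the extra replacement term. -/
theorem del_ins (c a : α) : delL c * insL a =
    insL a * delL c + (if a = c then lenL + 1 else 0) + replL a c := by
  refine end_ext_cons ?_ fun x y ih => ?_
  · simp only [Module.End.mul_apply, LinearMap.add_apply, insL_nil, delL_nil, replL_nil,
      ← consL_word, delL_cons]
    by_cases h : a = c
    · simp [h, lenL_nil]
    · simp [h, Ne.symm h]
  · simp only [Module.End.mul_apply, LinearMap.add_apply] at ih ⊢
    simp only [insL_cons, delL_cons, replL_cons, map_add, ih]
    by_cases h : a = c <;> by_cases h' : c = x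
    · subst h; subst h'
      simp [lenL_cons]; abel
    · subst h
      simp [lenL_cons, h']; abel
    · subst h'
      simp [h, Ne.symm h]; abel
    · simp [h, h', Ne.symm h]; abel

theorem repl_ins (b a c : α) : replL b a * insL c =
    insL c * replL b a + (if a = c then insL b else 0) := by
  refine end_ext_cons ?_ fun x y ih => ?_
  · simp only [Module.End.mul_apply, LinearMap.add_apply, insL_nil, replL_nil, ← consL_word,
      replL_cons]
    by_cases h : a = c
    · simp [h, insL_nil, consL_word]
    · simp [h]
  · simp only [Module.End.mul_apply, LinearMap.add_apply] at ih ⊢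
    simp only [insL_cons, replL_cons, map_add, ih]
    by_cases h : a = c <;> by_cases h' : a = x
    · subst h; subst h'
      simp [insL_cons]; abel
    · subst h
      simp [insL_cons, h']; abel
    · subst h'
      simp [insL_cons, h]; abel
    · simp [h, h']

theorem repl_del (b a c : α) : replL b a * delL c =
    delL c * replL b a - (if b = c then delL a else 0) := by
  refine end_ext_cons ?_ fun x y ih => ?_
  · simp only [Module.End.mul_apply, LinearMap.sub_apply, delL_nil, replL_nil, map_zero]
    by_cases h : b = c
    · simp [h, delL_nil]
    · simp [h]
  · simp only [Module.End.mul_apply, LinearMap.sub_apply] at ih ⊢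
    simp only [delL_cons, replL_cons, map_add, ih]
    by_cases h : b = c
    · subst h
      by_cases h' : a = x <;> by_cases h'' : b = x <;> simp [delL_cons, h', h''] <;> abel
    · by_cases h' : a = x <;> by_cases h'' : c = x
      · subst h' h''
        simp [delL_cons, h, Ne.symm h]; abel
      · subst h'
        simp [delL_cons, h, h'', Ne.symm h]
      · subst h''
        simp [h, h']
      · simp [h, h', h'']

theorem len_del (a : α) : lenL * delL a = delL a * lenL - delL a := by
  refine end_ext_cons ?_ fun x y ih => ?_
  · simp [delL_nil, lenL_nil]
  · simp only [Module.End.mul_apply, LinearMap.sub_apply] at ih ⊢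
    simp only [delL_cons, lenL_cons, map_add, ih, map_sub]
    by_cases h : a = x <;> simp [h]

theorem len_repl (b a : α) : lenL * replL b a = replL b a * lenL := by
  refine end_ext_cons ?_ fun x y ih => ?_
  · simp [replL_nil, lenL_nil]
  · simp only [Module.End.mul_apply] at ih ⊢
    simp only [replL_cons, lenL_cons, map_add, ih]
    by_cases h : a = x <;> simp [h, lenL_cons]
    abel

theorem del_del (a b : α) : delL a * delL b = delL b * delL a := by
  refine end_ext_cons ?_ fun x y ih => ?_
  · simp [delL_nil]
  · simp only [Module.End.mul_apply] at ih ⊢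
    simp only [delL_cons, map_add, ih]
    by_cases h : a = x <;> by_cases h' : b = x <;> simp [h, h']

end Operators

/-! ### The commuting family -/

section Family

variable {α : Type*} [DecidableEq α] [Fintype α]

/-- The operator `X_k = ∑ U_{a₁} ⋯ U_{a_k} D_{a_k} ⋯ D_{a₁}`, the sum being over all `k`-tuples of
letters: delete `k` letters, then reinsert the same letters anywhere. -/
noncomputable def X : ℕ → Module.End ℤ (Words α)
  | 0 => 1
  | k + 1 => ∑ a, insL a * X k * delL a

theorem X_zero : (X 0 : Module.End ℤ (Words α)) = 1 := rfl

theorem X_succ (k : ℕ) : (X (k + 1) : Module.End ℤ (Words α)) = ∑ a, insL a * X k * delL a := rfl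

theorem repl_X (b a : α) (k : ℕ) : replL b a * X k = X k * replL b a := by
  induction k with
  | zero => simp [X_zero]
  | succ k ih =>
    have h : ∀ c, replL b a * (insL c * X k * delL c) = insL c * X k * delL c * replL b a
        + ((if a = c then insL b * X k * delL c else 0)
          - (if b = c then insL c * X k * delL a else 0)) := by
      intro c
      calc replL b a * (insL c * X k * delL c) = (replL b a * insL c) * X k * delL c := by
            noncomm_ring
        _ = insL c * (replL b a * X k) * delL c + (if a = c then insL b else 0) * X k * delL c := by
            rw [repl_ins]; noncomm_ring
        _ = insL c * X k * (replL b a * delL c) + (if a = c then insL b else 0) * X k * delL c := by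
            rw [ih]; noncomm_ring
        _ = _ := by
            rw [repl_del]
            split_ifs <;> noncomm_ring
    simp only [X_succ, Finset.mul_sum, Finset.sum_mul, h, Finset.sum_add_distrib,
      Finset.sum_sub_distrib, Finset.sum_ite_eq, Finset.mem_univ, if_true, sub_self, add_zero]

theorem len_X (k : ℕ) : (lenL * X k : Module.End ℤ (Words α)) = X k * lenL := by
  induction k with
  | zero => simp [X_zero]
  | succ k ih =>
    simp only [X_succ, Finset.mul_sum, Finset.sum_mul]
    refine Finset.sum_congr rfl fun c _ => ?_
    calc lenL * (insL c * X k * delL c) = (lenL * insL c) * X k * delL c := by noncomm_ring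
      _ = insL c * (lenL * X k) * delL c + insL c * X k * delL c := by
          rw [len_ins]; noncomm_ring
      _ = insL c * X k * (lenL * delL c) + insL c * X k * delL c := by rw [ih]; noncomm_ring
      _ = _ := by rw [len_del]; noncomm_ring

/-- The operator `G_c = ∑_b E_{bc} D_b`. -/
noncomputable def G (c : α) : Module.End ℤ (Words α) := ∑ b, replL b c * delL b

/-- The operator `∑_b E_{bc} G_b`, one further application of the matrix `E` to the vector `D`. -/
noncomputable def G₂ (c : α) : Module.End ℤ (Words α) := ∑ b, replL b c * G b

theorem G_del (c a : α) : G c * delL a = delL a * (G c - delL c) := by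
  have h : ∀ b, replL b c * delL b * delL a = delL a * (replL b c * delL b)
      - (if b = a then delL c * delL b else 0) := by
    intro b
    rw [mul_assoc, del_del, ← mul_assoc, repl_del]
    split_ifs <;> noncomm_ring
  simp only [G, Finset.sum_mul, h, Finset.sum_sub_distrib, Finset.sum_ite_eq', Finset.mem_univ,
    if_true, mul_sub, Finset.mul_sum, del_del c a]

/-- The coefficient of `D_c` when `D_c` is moved to the right of `X_{k+1}`; see `del_X`. -/
noncomputable def P (k : ℕ) : Module.End ℤ (Words α) :=
  X (k + 1) + ((k : ℤ) + 1) • (X k * (lenL + (1 - (k : ℤ)) • 1))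

/-- The coefficient of `G_c` when `D_c` is moved to the right of `X_{k+1}`; see `del_X`. -/
noncomputable def Q (k : ℕ) : Module.End ℤ (Words α) := ((k : ℤ) + 1) • X k

/-- The recursion `D_c X_{k+1} = P_k D_c + Q_k G_c`, where `P_k` and `Q_k` involve only the `X_j`
and `H`. It is what allows an induction on the length of words. -/
theorem del_X (c : α) (k : ℕ) : delL c * X (k + 1) = P k * delL c + Q k * G c := by
  have step : ∀ (k : ℕ) (a : α), delL c * (insL a * X k * delL a) = insL a * (delL c * X k) * delL a
      + (if a = c then (lenL + 1) * X k * delL a else 0) + X k * (replL a c * delL a) := by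
    intro k a
    calc delL c * (insL a * X k * delL a) = (delL c * insL a) * X k * delL a := by noncomm_ring
      _ = insL a * (delL c * X k) * delL a + (if a = c then lenL + 1 else 0) * X k * delL a
            + (replL a c * X k) * delL a := by rw [del_ins]; noncomm_ring
      _ = _ := by
          rw [repl_X]
          split_ifs <;> noncomm_ring
  have total : ∀ k, delL c * X (k + 1) = ∑ a, insL a * (delL c * X k) * delL a
      + X k * (lenL + 1) * delL c + X k * G c := by
    intro k
    rw [X_succ, Finset.mul_sum]
    simp only [step, Finset.sum_add_distrib, Finset.sum_ite_eq', Finset.mem_univ, if_true, G,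
      Finset.mul_sum, add_mul, mul_add, one_mul, mul_one, len_X]
  induction k with
  | zero =>
    rw [total, P, Q, X_succ, X_zero]
    simp only [mul_one, one_mul, Nat.cast_zero, zero_add, one_smul, sub_zero,
      mul_assoc, del_del c]
    rw [add_mul, add_mul, Finset.sum_mul]
    simp only [mul_assoc]
    noncomm_ring
  | succ k ih =>
    -- Moving `D_a` to the left past `H` and past `G_c` costs one copy of `D_a D_c` each.
    have key : ∀ a, insL a * (delL c * X (k + 1)) * delL a = (insL a * X (k + 1) * delL a) * delL c
        + ((k : ℤ) + 1) • ((insL a * X k * delL a) *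
          ((lenL - ((k : ℤ) + 1) • 1) * delL c + G c)) := by
      intro a
      have h1 : lenL * (delL c * delL a) = delL a * ((lenL - 1) * delL c) := by
        rw [del_del, ← mul_assoc, len_del]; noncomm_ring
      have h2 : ((lenL + (1 - (k : ℤ)) • 1) * delL c + G c) * delL a
          = delL a * ((lenL - ((k : ℤ) + 1) • 1) * delL c + G c) := by
        rw [add_mul, G_del, mul_assoc, add_mul, h1, smul_mul_assoc, one_mul, del_del c a]
        simp only [sub_mul, mul_sub, mul_add, smul_mul_assoc, one_mul, mul_smul_comm]
        module
      calc insL a * (delL c * X (k + 1)) * delL a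
          = insL a * X (k + 1) * (delL c * delL a) + ((k : ℤ) + 1) • (insL a * X k *
            (((lenL + (1 - (k : ℤ)) • 1) * delL c + G c) * delL a)) := by
            rw [ih, P, Q]
            simp only [add_mul, mul_add, smul_mul_assoc, mul_smul_comm, mul_assoc, smul_add]
            abel
        _ = _ := by
            rw [h2, del_del c a]
            simp only [mul_assoc]
    rw [total]
    simp only [key, Finset.sum_add_distrib, ← Finset.sum_mul, ← Finset.smul_sum, ← X_succ]
    rw [P, Q]
    simp only [add_mul, mul_add, sub_mul, mul_sub, smul_mul_assoc, mul_smul_comm, mul_assoc,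
      smul_add, one_mul, mul_one, smul_sub]
    push_cast
    module

/-- The analogue of `del_X` for `G_c`, with the same coefficients, because each `E_{bc}` commutes
with `P_k` and `Q_k`. -/
theorem G_X (c : α) (k : ℕ) : G c * X (k + 1) = P k * G c + Q k * G₂ c := by
  have hQ : ∀ b, replL b c * Q k = Q k * replL b c := fun b => by
    simp only [Q, mul_smul_comm, smul_mul_assoc, repl_X]
  have hP : ∀ b, replL b c * P k = P k * replL b c := fun b => by
    simp only [P, mul_add, add_mul, mul_smul_comm, smul_mul_assoc, repl_X, mul_one]
    rw [← mul_assoc, repl_X, mul_assoc, ← len_repl, mul_assoc]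
  simp only [G, G₂, Finset.sum_mul, Finset.mul_sum, ← Finset.sum_add_distrib]
  refine Finset.sum_congr rfl fun b _ => ?_
  rw [mul_assoc, del_X, mul_add, ← mul_assoc, hP, ← mul_assoc, hQ]
  simp only [mul_assoc, G, Finset.mul_sum]

theorem del_X_X (c : α) (k l : ℕ) : delL c * (X (k + 1) * X (l + 1)) =
    P k * P l * delL c + (P k * Q l + Q k * P l) * G c + Q k * Q l * G₂ c := by
  rw [← mul_assoc, del_X, add_mul, mul_assoc, del_X, mul_assoc, G_X]
  noncomm_ring

/-! ### Filtration by length -/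

/-- The submodule of vectors killed by every product of `n` deletion operators. It serves as a
filtration by length which is stable under `E_{ba}` and `H`. -/
noncomputable def delNil : ℕ → Submodule ℤ (Words α)
  | 0 => ⊥
  | n + 1 => ⨅ a : α, (delNil n).comap (delL a)

theorem mem_delNil_succ {n : ℕ} {x : Words α} :
    x ∈ delNil (n + 1) ↔ ∀ a, delL a x ∈ delNil n := by
  simp [delNil, Submodule.mem_iInf]

theorem repl_mem {n : ℕ} {x : Words α} (hx : x ∈ delNil n) (b a : α) :
    replL b a x ∈ delNil n := by
  induction n generalizing x with
  | zero => simp_all [delNil]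
  | succ n ih =>
    rw [mem_delNil_succ] at hx ⊢
    intro c
    have h := LinearMap.congr_fun (repl_del b a c) x
    simp only [Module.End.mul_apply, LinearMap.sub_apply, eq_sub_iff_add_eq] at h
    rw [← h]
    refine add_mem (ih (hx c)) ?_
    split_ifs
    · exact hx a
    · exact zero_mem _

theorem len_mem {n : ℕ} {x : Words α} (hx : x ∈ delNil n) : lenL x ∈ delNil n := by
  induction n generalizing x with
  | zero => simp_all [delNil]
  | succ n ih =>
    rw [mem_delNil_succ] at hx ⊢
    intro c
    have h := LinearMap.congr_fun (len_del c) x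
    simp only [Module.End.mul_apply, LinearMap.sub_apply, eq_sub_iff_add_eq] at h
    rw [← h]
    exact add_mem (ih (hx c)) (hx c)

theorem G_mem {n : ℕ} {x : Words α} (hx : x ∈ delNil (n + 1)) (c : α) : G c x ∈ delNil n := by
  simp only [G, LinearMap.sum_apply, Module.End.mul_apply]
  exact sum_mem fun b _ => repl_mem (mem_delNil_succ.1 hx b) _ _

theorem G₂_mem {n : ℕ} {x : Words α} (hx : x ∈ delNil (n + 1)) (c : α) : G₂ c x ∈ delNil n := by
  simp only [G₂, LinearMap.sum_apply, Module.End.mul_apply]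
  exact sum_mem fun b _ => repl_mem (G_mem hx b) _ _

theorem cons_mem {n : ℕ} {x : Words α} (hx : x ∈ delNil n) (c : α) :
    consL c x ∈ delNil (n + 1) := by
  induction n generalizing x with
  | zero =>
    have : x = 0 := by simpa [delNil] using hx
    simp [this]
  | succ n ih =>
    rw [mem_delNil_succ]
    intro a
    rw [delL_cons]
    refine add_mem ?_ (ih (mem_delNil_succ.1 hx a))
    split_ifs
    · exact hx
    · exact zero_mem _

theorem word_mem (w : List α) : word w ∈ delNil (w.length + 1) := by
  induction w with
  | nil => rw [mem_delNil_succ]; intro a; rw [delL_nil]; exact zero_mem _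
  | cons x w ih => rw [← consL_word]; exact cons_mem ih x

/-! ### Positivity -/

/-- The symmetric bilinear form for which the words are orthonormal. -/
noncomputable def dot : Words α →ₗ[ℤ] Words α →ₗ[ℤ] ℤ :=
  linearCombination ℤ fun w => Finsupp.lapply w

theorem dot_word (w : List α) (y : Words α) : dot (word w) y = y w := by
  simp [dot, word]

theorem dot_symm (x y : Words α) : dot x y = dot y x := by
  induction x using Finsupp.induction_linear with
  | zero => simp
  | add f g hf hg => simp [hf, hg]
  | single v r =>
    induction y using Finsupp.induction_linear with
    | zero => simp
    | add f g hf hg => simp [hf, hg]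
    | single w s =>
      simp only [dot, linearCombination_single, LinearMap.smul_apply, lapply_apply, single_apply,
        smul_eq_mul]
      by_cases h : v = w
      · simp [h, mul_comm]
      · simp [h, Ne.symm h]

/-- The form is positive definite. -/
theorem dot_self {x : Words α} (h : dot x x = 0) : x = 0 := by
  have h' : dot x x = ∑ w ∈ x.support, x w * x w := by
    simp [dot, linearCombination_apply, Finsupp.sum, LinearMap.sum_apply]
  rw [h', Finset.sum_eq_zero_iff_of_nonneg fun w _ => mul_self_nonneg _] at h
  ext w
  by_contra hw
  exact hw (by simpa using h w (by simpa using hw))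

/-- In the basis of words, `U_a` and `D_a` are transposes of each other. -/
theorem ins_apply_word (a : α) (v w : List α) :
    insL a (word v) w = delL a (word w) v := by
  have hc : ∀ (x y : α) (f : Words α) (v : List α),
      consL x f (y :: v) = if x = y then f v else 0 := by
    intro x y f v
    induction f using Finsupp.induction_linear with
    | zero => simp
    | add f g hf hg => simp only [map_add, Finsupp.add_apply, hf, hg]; split_ifs <;> simp
    | single v r => 
      simp only [consL, lmapDomain_apply, mapDomain_single, single_apply, List.cons.injEq]
      split_ifs <;> simp_all
  have hn : ∀ (x : α) (f : Words α), consL x f [] = 0 := by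
    intro x f
    induction f using Finsupp.induction_linear with
    | zero => simp
    | add f g hf hg => simp [hf, hg]
    | single v r => simp [consL]
  induction w generalizing v with
  | nil =>
    rw [delL_nil]
    cases v with
    | nil => simp [insL_nil, word]
    | cons x v => simp [← consL_word, insL_cons, hn]
  | cons y w ih =>
    rw [← consL_word y, delL_cons]
    cases v with
    | nil =>
      simp only [insL_nil, Finsupp.add_apply, hn, add_zero, word, single_apply, List.cons.injEq]
      by_cases h : a = y <;> simp [h, single_apply, eq_comm]
    | cons x v =>
      rw [← consL_word x, insL_cons]
      simp only [Finsupp.add_apply, hc, ih]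
      congr 1
      · by_cases h : a = y <;> simp [h, consL_word, single_apply, eq_comm]
      · simp [eq_comm]

theorem dot_ins (a : α) (x y : Words α) : dot (insL a x) y = dot x (delL a y) := by
  induction x using Finsupp.induction_linear with
  | zero => simp
  | add f g hf hg => simp [hf, hg]
  | single v r =>
    induction y using Finsupp.induction_linear with
    | zero => simp
    | add f g hf hg => simp [hf, hg]
    | single w s =>
      have hv : single v r = r • word v := by simp [word]
      have hw : single w s = s • word w := by simp [word]
      rw [hv, hw]
      simp only [map_smul, LinearMap.smul_apply]
      rw [dot_symm, dot_word, dot_word, ins_apply_word]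

theorem dot_X (k : ℕ) (x y : Words α) : dot (X k x) y = dot x (X k y) := by
  induction k generalizing x y with
  | zero => simp [X_zero]
  | succ k ih =>
    simp only [X_succ, LinearMap.sum_apply, map_sum, Module.End.mul_apply]
    refine Finset.sum_congr rfl fun a _ => ?_
    rw [dot_ins, ih, dot_symm, ← dot_ins, dot_symm]

set_option maxHeartbeats 1000000 in
/-- By induction on `n`: the recursion shows that every `D_c` kills `z = [X_{k+1}, X_{l+1}] x`,
hence so does every `X_{j+1}`. Since the `X_j` are self-adjoint, `⟨z, z⟩ = 0`. -/
theorem X_comm_of_mem {n : ℕ} {x : Words α} (hx : x ∈ delNil n) (k l : ℕ) :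
    X k (X l x) = X l (X k x) := by
  induction n generalizing x k l with
  | zero =>
    have : x = 0 := by simpa [delNil] using hx
    simp [this]
  | succ n ih =>
    rcases k with _ | k
    · simp [X_zero]
    rcases l with _ | l
    · simp [X_zero]
    have hlen : ∀ k (y : Words α), lenL (X k y) = X k (lenL y) := fun k y =>
      LinearMap.congr_fun (len_X k) y
    have hPP : ∀ y : Words α, y ∈ delNil n → P k (P l y) = P l (P k y) := by
      intro y hy
      have hy1 := len_mem hy
      have hy2 := len_mem hy1
      simp only [P, Module.End.mul_apply, LinearMap.add_apply, LinearMap.smul_apply, map_add,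
        map_smul, hlen, Module.End.one_apply, smul_add]
      simp only [ih hy (k + 1) (l + 1), ih hy (k + 1) l, ih hy k (l + 1), ih hy k l,
        ih hy1 (k + 1) l, ih hy1 k (l + 1), ih hy1 k l, ih hy2 k l]
      module
    have hPQ : ∀ y : Words α, y ∈ delNil n →
        P k (Q l y) + Q k (P l y) = P l (Q k y) + Q l (P k y) := by
      intro y hy
      have hy1 := len_mem hy
      simp only [P, Q, Module.End.mul_apply, LinearMap.add_apply, LinearMap.smul_apply, map_add,
        map_smul, hlen, Module.End.one_apply, smul_add]
      simp only [ih hy (k + 1) l, ih hy k (l + 1), ih hy k l, ih hy1 k l]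
      module
    have hQQ : ∀ y : Words α, y ∈ delNil n → Q k (Q l y) = Q l (Q k y) := by
      intro y hy
      simp only [Q, LinearMap.smul_apply, map_smul]
      simp only [ih hy k l]
      module
    obtain ⟨z, hz⟩ : ∃ z, z = X (k + 1) (X (l + 1) x) - X (l + 1) (X (k + 1) x) := ⟨_, rfl⟩
    have hdel : ∀ c, delL c z = 0 := by
      intro c
      have h1 := LinearMap.congr_fun (del_X_X c k l) x
      have h2 := LinearMap.congr_fun (del_X_X c l k) x
      simp only [LinearMap.add_apply, Module.End.mul_apply] at h1 h2
      rw [hPP _ (mem_delNil_succ.1 hx c), hPQ _ (G_mem hx c), hQQ _ (G₂_mem hx c), ← h2] at h1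
      rw [hz, map_sub, sub_eq_zero, h1]
    have hX : ∀ j, X (j + 1) z = 0 := by
      intro j
      simp [X_succ, LinearMap.sum_apply, hdel]
    have hzz : dot z z = 0 := by
      nth_rewrite 1 [hz]
      simp only [map_sub, LinearMap.sub_apply, dot_X, hX, map_zero, sub_zero]
    exact sub_eq_zero.1 (hz ▸ dot_self hzz)

theorem X_comm (k l : ℕ) : (X k * X l : Module.End ℤ (Words α)) = X l * X k :=
  end_ext fun w => X_comm_of_mem (word_mem w) k l

end Family

/-! ### Restriction to permutation words -/

section Permutations

variable {α : Type*} [DecidableEq α] [Fintype α]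

theorem repl_self_word (a : α) (w : List α) :
    replL a a (word w) = (w.count a : ℤ) • word w := by
  induction w with
  | nil => simp [replL_nil]
  | cons x w ih =>
    rw [← consL_word, replL_cons, ih, map_smul, List.count_cons]
    by_cases h : a = x
    · simp [h, add_smul, add_comm]
    · simp [h, Ne.symm h]

theorem repl_self_apply (a : α) (y : Words α) (w : List α) :
    replL a a y w = (w.count a : ℤ) * y w := by
  induction y using Finsupp.induction_linear with
  | zero => simp
  | add f g hf hg => simp [hf, hg, mul_add]
  | single v r =>
    have hv : single v r = r • word v := by simp [word]
    rw [hv, map_smul, repl_self_word]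
    by_cases h : v = w
    · subst h; simp; ring
    · simp [word, h]

/-- `X_k` preserves the multiset of letters of a word, since it commutes with the operators
`E_{aa}`, which count the occurrences of `a`. -/
theorem perm_of_X_apply_ne {k : ℕ} {w w' : List α} (h : X k (word w) w' ≠ 0) : w.Perm w' := by
  rw [List.perm_iff_count]
  intro a
  -- Compare coefficients at `w'` in `E_{aa} X_k w = X_k E_{aa} w = (count a w) X_k w`.
  have h1 := congrArg (fun f => f w') (LinearMap.congr_fun (repl_X a a k) (word w))
  simp only [Module.End.mul_apply, repl_self_word, map_smul, repl_self_apply,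
    Finsupp.smul_apply, smul_eq_mul] at h1
  exact_mod_cast (mul_right_cancel₀ h h1).symm

theorem del_word_of_nodup (a : α) {w : List α} (hw : w.Nodup) :
    delL a (word w) = if a ∈ w then word (w.erase a) else 0 := by
  induction w with
  | nil => simp [delL_nil]
  | cons x w ih =>
    rw [List.nodup_cons] at hw
    rw [← consL_word, delL_cons, ih hw.2]
    by_cases h : a = x
    · subst h; simp [hw.1]
    · by_cases h' : a ∈ w
      · simp [h, h', consL_word, List.erase_cons_tail, Ne.symm h]
      · simp [h', h]

/-- Double counting of the pairs `a ∈ T` with `T` a `(k + 1)`-subset of `L`. -/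
theorem sum_powersetCard_erase (L : Finset α) (k : ℕ) (f : Finset α → ℤ) :
    ∑ a ∈ L, ∑ T ∈ (L.erase a).powersetCard k, f (insert a T) =
      (k + 1) * ∑ T ∈ L.powersetCard (k + 1), f T := by
  have h : ((k : ℤ) + 1) * ∑ T ∈ L.powersetCard (k + 1), f T =
      ∑ T ∈ L.powersetCard (k + 1), ∑ _a ∈ T, f T := by
    rw [Finset.mul_sum]
    refine Finset.sum_congr rfl fun T hT => ?_
    simp [(Finset.mem_powersetCard.1 hT).2]
  rw [h, Finset.sum_sigma', Finset.sum_sigma']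
  refine Finset.sum_bij' (fun p _ => ⟨insert p.1 p.2, p.1⟩) (fun p _ => ⟨p.2, p.1.erase p.2⟩)
    ?_ ?_ ?_ ?_ ?_
  · rintro ⟨a, T⟩ h
    simp only [Finset.mem_sigma, Finset.mem_powersetCard] at h ⊢
    have ha : a ∉ T := fun h' => by simpa using h.2.1 h'
    refine ⟨⟨Finset.insert_subset h.1 (h.2.1.trans (Finset.erase_subset _ _)), ?_⟩, by simp⟩
    rw [Finset.card_insert_of_notMem ha, h.2.2]
  · rintro ⟨T, a⟩ h
    simp only [Finset.mem_sigma, Finset.mem_powersetCard] at h ⊢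
    refine ⟨h.1.1 h.2, Finset.erase_subset_erase _ h.1.1, ?_⟩
    rw [Finset.card_erase_of_mem h.2, h.1.2, Nat.add_sub_cancel]
  · rintro ⟨a, T⟩ h
    simp only [Finset.mem_sigma, Finset.mem_powersetCard] at h
    have ha : a ∉ T := fun h' => by simpa using h.2.1 h'
    simp [ha]
  · rintro ⟨T, a⟩ h
    simp only [Finset.mem_sigma] at h
    simp [Finset.insert_erase h.2]
  · rintro ⟨a, T⟩ h
    rfl

theorem X_succ_apply (k : ℕ) {w w' : List α} (hw : w.Nodup) (hw' : w'.Nodup) (h : w.Perm w') :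
    X (k + 1) (word w) w' = ∑ a ∈ w.toFinset, X k (word (w.erase a)) (w'.erase a) := by
  rw [← dot_word]
  simp only [X_succ, LinearMap.sum_apply, map_sum, Module.End.mul_apply]
  rw [← Finset.sum_subset (Finset.subset_univ w.toFinset)]
  · refine Finset.sum_congr rfl fun a ha => ?_
    rw [List.mem_toFinset] at ha
    rw [dot_symm, dot_ins, dot_symm, del_word_of_nodup a hw, del_word_of_nodup a hw',
      if_pos ha, if_pos (h.mem_iff.1 ha), dot_word]
  · intro a _ ha
    rw [List.mem_toFinset] at ha
    simp [del_word_of_nodup a hw, ha]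

/-- On words without repetition, the matrix entry of `X_k` is `k!` times the number of `k`-sets of
letters whose removal makes the two words equal. -/
theorem X_apply (k : ℕ) {w w' : List α} (hw : w.Nodup) (hw' : w'.Nodup) (h : w.Perm w') :
    X k (word w) w' = (k.factorial : ℤ) * ∑ T ∈ w.toFinset.powersetCard k,
      if w.filter (· ∉ T) = w'.filter (· ∉ T) then 1 else 0 := by
  induction k generalizing w w' with
  | zero => simp [X_zero, word, single_apply, Finset.filter_singleton, apply_ite]
  | succ k ih =>
    rw [X_succ_apply k hw hw' h, Nat.factorial_succ]
    have hfil : ∀ (a : α) (T : Finset α) {v : List α}, v.Nodup →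
        (v.erase a).filter (· ∉ T) = v.filter (· ∉ insert a T) := by
      intro a T v hv
      rw [hv.erase_eq_filter, List.filter_filter]
      congr 1
      ext x
      by_cases hx : x = a <;> simp [hx]
    have hfin : ∀ a, (w.erase a).toFinset = w.toFinset.erase a := by
      intro a
      ext x
      simp [hw.mem_erase_iff]
    have hstep : ∀ a ∈ w.toFinset, X k (word (w.erase a)) (w'.erase a) =
        (k.factorial : ℤ) * ∑ T ∈ (w.toFinset.erase a).powersetCard k,
          if w.filter (· ∉ insert a T) = w'.filter (· ∉ insert a T) then 1 else 0 := by
      intro a _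
      rw [ih (hw.erase a) (hw'.erase a) (h.erase a), hfin]
      simp only [hfil _ _ hw, hfil _ _ hw']
    rw [Finset.sum_congr rfl hstep, ← Finset.mul_sum,
      sum_powersetCard_erase w.toFinset k
        (fun T => if w.filter (· ∉ T) = w'.filter (· ∉ T) then 1 else 0)]
    push_cast
    ring

/-- The word `σ(1) σ(2) ⋯ σ(n)` in one-line notation. -/
noncomputable def permWord {n : ℕ} (σ : Equiv.Perm (Fin n)) : List (Fin n) := List.ofFn σ

theorem permWord_nodup {n : ℕ} (σ : Equiv.Perm (Fin n)) : (permWord σ).Nodup :=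
  List.nodup_ofFn.2 σ.injective

theorem mem_permWord {n : ℕ} (σ : Equiv.Perm (Fin n)) (a : Fin n) : a ∈ permWord σ := by
  rw [permWord, List.mem_ofFn]
  exact σ.surjective a

theorem permWord_perm {n : ℕ} (σ τ : Equiv.Perm (Fin n)) : (permWord σ).Perm (permWord τ) :=
  (List.perm_ext_iff_of_nodup (permWord_nodup σ) (permWord_nodup τ)).2 fun a => by
    simp [mem_permWord]

theorem permWord_injective {n : ℕ} : Function.Injective (permWord (n := n)) := fun _ _ h =>
  Equiv.ext (congrFun (List.ofFn_injective h))

theorem exists_permWord {n : ℕ} {σ : Equiv.Perm (Fin n)} {w : List (Fin n)}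
    (h : (permWord σ).Perm w) : ∃ τ, permWord τ = w := by
  have hlen : w.length = n := by rw [← h.length_eq, permWord, List.length_ofFn]
  have hw : List.ofFn (fun i : Fin n => w.get (i.cast hlen.symm)) = w := by
    conv_rhs => rw [← List.ofFn_get w]
    exact (List.ofFn_congr hlen.symm _)
  have hinj : Function.Injective fun i : Fin n => w.get (i.cast hlen.symm) :=
    (List.nodup_iff_injective_get.1 (h.nodup_iff.1 (permWord_nodup σ))).comp
      (Fin.cast_injective hlen.symm)
  exact ⟨Equiv.ofBijective _ (Finite.injective_iff_bijective.1 hinj), hw⟩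

/-- Two permutation words agree after removal of `T` iff the remaining letters occur in the same
order in both, `σ⁻¹` giving the positions of the letters in the word of `σ`. -/
theorem filter_permWord_eq_iff {n : ℕ} (σ τ : Equiv.Perm (Fin n)) (T : Finset (Fin n)) :
    (permWord σ).filter (· ∉ T) = (permWord τ).filter (· ∉ T) ↔
      ∀ a ∉ T, ∀ b ∉ T, τ.symm a < τ.symm b → σ.symm a < σ.symm b := by
  have hpw : ∀ ρ : Equiv.Perm (Fin n), ((permWord ρ).filter (· ∉ T)).Pairwise
      fun a b => ρ.symm a < ρ.symm b := fun ρ =>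
    List.Pairwise.filter _ (List.pairwise_ofFn.2 fun i j hij => by simpa using hij)
  have hmem : ∀ (ρ : Equiv.Perm (Fin n)) a, a ∈ (permWord ρ).filter (· ∉ T) ↔ a ∉ T := by
    simp [mem_permWord]
  constructor
  · intro h a ha b hb hab
    have h1 := hpw σ
    rw [h] at h1
    have h2 := (h1.and (hpw τ)).imp (S := fun a b =>
      (τ.symm a < τ.symm b ↔ σ.symm a < σ.symm b)) fun h => by simp [h.1, h.2]
    have h3 := (h1.and (hpw τ)).imp (S := flip fun a b =>
      (τ.symm a < τ.symm b ↔ σ.symm a < σ.symm b)) fun h => by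
        simp [flip, h.1.not_gt, h.2.not_gt]
    exact (h2.forall_of_forall_of_flip (by simp) h3 ((hmem τ a).2 ha) ((hmem τ b).2 hb)).1 hab
  · intro h
    have h1 : ((permWord τ).filter (· ∉ T)).Pairwise fun a b => σ.symm a < σ.symm b :=
      (hpw τ).imp_of_mem fun ha hb hab => h _ ((hmem τ _).1 ha) _ ((hmem τ _).1 hb) hab
    refine List.Perm.eq_of_pairwise ?_ (hpw σ) h1 ((permWord_perm σ τ).filter _)
    intro a b _ _ hab hba
    exact absurd hab hba.asymm

/-- The matrix entry of `X_k` between the words of `σ` and `τ`. The removed set of letters `T`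
corresponds to the set of positions `τ⁻¹(Tᶜ)`, on which `σ⁻¹τ` is increasing. -/
theorem X_permWord_apply {n k : ℕ} (hk : k ≤ n) (σ τ : Equiv.Perm (Fin n)) :
    X k (word (permWord σ)) (permWord τ) =
      (k.factorial : ℤ) * noninv n (n - k) (σ⁻¹ * τ) := by
  have hfin : (permWord σ).toFinset = Finset.univ := by
    ext a; simp [mem_permWord]
  rw [X_apply k (permWord_nodup σ) (permWord_nodup τ) (permWord_perm σ τ), hfin]
  congr 1
  simp only [filter_permWord_eq_iff, Finset.sum_boole, noninv]
  norm_cast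
  refine Finset.card_nbij' (fun T => Tᶜ.map τ.symm.toEmbedding) (fun s => (s.map τ.toEmbedding)ᶜ)
    ?_ ?_ ?_ ?_
  · intro T hT
    simp only [Finset.coe_filter, Finset.mem_powersetCard, Set.mem_ofPred_eq] at hT ⊢
    refine ⟨⟨Finset.subset_univ _, ?_⟩, ?_⟩
    · rw [Finset.card_map, Finset.card_compl, hT.1.2, Fintype.card_fin]
    · intro i hi j hj hij
      rw [Finset.mem_map_equiv] at hi hj
      simpa using hT.2 _ (Finset.mem_compl.1 hi) _ (Finset.mem_compl.1 hj) (by simpa using hij)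
  · intro s hs
    simp only [Finset.coe_filter, Finset.mem_powersetCard, Set.mem_ofPred_eq] at hs ⊢
    refine ⟨⟨Finset.subset_univ _, ?_⟩, ?_⟩
    · rw [Finset.card_compl, Finset.card_map, hs.1.2, Fintype.card_fin]
      omega
    · intro a ha b hb hab
      rw [Finset.mem_compl, not_not, Finset.mem_map_equiv] at ha hb
      simpa using hs.2 _ ha _ hb hab
  · intro T _
    ext a; simp
  · intro s _
    ext a; simp

/-- On permutation words, `X_k` is right multiplication by `k! · ν_{(n-k,1^k)}`. -/
theorem X_permWord {n k : ℕ} (hk : k ≤ n) (σ : Equiv.Perm (Fin n)) :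
    X k (word (permWord σ)) = ∑ τ : Equiv.Perm (Fin n),
      ((k.factorial : ℤ) * noninv n (n - k) (σ⁻¹ * τ)) • word (permWord τ) := by
  ext w
  simp only [Finsupp.coe_finsetSum, Finset.sum_apply, Finsupp.smul_apply, single_apply,
    smul_eq_mul, mul_ite, mul_one, mul_zero]
  by_cases hw : ∃ τ, permWord τ = w
  · obtain ⟨τ, rfl⟩ := hw
    simp [X_permWord_apply hk, permWord_injective.eq_iff]
  · have h0 : X k (word (permWord σ)) w = 0 := by
      by_contra h
      exact hw (exists_permWord (perm_of_X_apply_ne h))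
    rw [h0]
    push Not at hw
    simp [hw]

theorem sum_noninv_comm {n k l : ℕ} (hk : k ≤ n) (hl : l ≤ n) (π : Equiv.Perm (Fin n)) :
    ∑ τ : Equiv.Perm (Fin n), (noninv n k τ : ℤ) * noninv n l (τ⁻¹ * π) =
      ∑ τ : Equiv.Perm (Fin n), (noninv n l τ : ℤ) * noninv n k (τ⁻¹ * π) := by
  have key : ∀ {k l : ℕ}, k ≤ n → l ≤ n → X (n - l) (X (n - k) (word (permWord 1))) (permWord π) =
      ((n - k).factorial : ℤ) * (n - l).factorial *
        ∑ τ : Equiv.Perm (Fin n), (noninv n k τ : ℤ) * noninv n l (τ⁻¹ * π) := by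
    intro k l hk hl
    rw [X_permWord (Nat.sub_le n k), map_sum]
    simp only [map_smul, Finsupp.coe_finsetSum, Finset.sum_apply, Finsupp.smul_apply,
      X_permWord_apply (Nat.sub_le n l), Nat.sub_sub_self hk, Nat.sub_sub_self hl, inv_one,
      one_mul, smul_eq_mul, Finset.mul_sum]
    exact Finset.sum_congr rfl fun τ _ => by ring
  have h := congrArg (fun f => f (permWord π))
    (LinearMap.congr_fun (X_comm (n - l) (n - k)) (word (permWord (1 : Equiv.Perm (Fin n)))))
  simp only [Module.End.mul_apply] at h
  rw [key hk hl, key hl hk, mul_comm ((n - l).factorial : ℤ)] at h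
  refine mul_left_cancel₀ ?_ h
  positivity

theorem nu_mul_nu (n k l : ℕ) : nu n k * nu n l = ∑ π : Equiv.Perm (Fin n),
    MonoidAlgebra.single π
      (∑ τ : Equiv.Perm (Fin n), (noninv n k τ : ℤ) * noninv n l (τ⁻¹ * π)) := by
  have h : ∀ π : Equiv.Perm (Fin n), MonoidAlgebra.single π
      (∑ τ : Equiv.Perm (Fin n), (noninv n k τ : ℤ) * noninv n l (τ⁻¹ * π)) =
      ∑ τ : Equiv.Perm (Fin n), MonoidAlgebra.single π
        ((noninv n k τ : ℤ) * noninv n l (τ⁻¹ * π)) := fun π =>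
    map_sum (MonoidAlgebra.singleAddHom π) _ _
  simp only [nu, Finset.sum_mul_sum, MonoidAlgebra.single_mul_single, h]
  rw [Finset.sum_comm (γ := Equiv.Perm (Fin n))]
  conv_rhs => rw [Finset.sum_comm]
  rw [Finset.sum_comm]
  refine Finset.sum_congr rfl fun u _ => ?_
  refine Fintype.sum_equiv (Equiv.mulLeft u) _ _ fun v => ?_
  simp

end Permutations

end NuCommute

/-- The operators `ν_{(k,1^{n-k})}` pairwise commute in `ℤ[S_n]`. -/
theorem nu_commute (n k l : ℕ) (hn : 1 ≤ n) (hk1 : 1 ≤ k) (hkn : k ≤ n)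
    (hl1 : 1 ≤ l) (hln : l ≤ n) :
    nu n k * nu n l = nu n l * nu n k := by
  simp only [NuCommute.nu_mul_nu, NuCommute.sum_noninv_comm hkn hln]
end

section
/- For every n ≥ 1 and all k, ℓ with 0 ≤ k, ℓ ≤ ⌊n/2⌋, the elements ν_{(2^k,1^{n−2k})} and ν_{(2^ℓ,1^{n−2ℓ})} commute in the group algebra ℤ[S_n]. -/
/-!
Call a set of pairwise disjoint two-element subsets (edges) of `Fin n` a matching, and let
`ε_S(w)` be the product over the edges `{i < j}` of `S` of the sign of `w j - w i`.

Since the indicator of `w i < w j` is `(1 + sign) / 2`, expanding products gives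
`2 ^ k • ν_k = ∑_S c_k(S) • e_S`, where `e_S = ∑_w ε_S(w) w` and `c_k(S)` is the number of
`k`-edge matchings containing `S` (`two_pow_smul_nu`).  As the symmetric group acts transitively
on matchings of a given size, `c_k(S)` depends only on `|S|` (`extCount_eq_of_card_eq`).  So it
suffices that `e_S * e_T = 0` whenever `|S| ≠ |T|` (`signElt_mul_eq_zero`): the surviving terms of
`ν_k ν_l` and `ν_l ν_k` then agree one by one.

The vanishing is a statement about induced characters having no common constituent, and is proved by
an explicit cancellation.  The sign satisfies `ε_S(u v) = ε_{vS}(u) ε_S(v)`, so it is enough to find,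
for matchings `S`, `T` of different sizes, an involution `g` preserving both and with
`ε_S(g) ε_T(g) = -1` (`exists_opposite_signs`).  If `|S| < |T|`, some component of `S ∪ T` is a path
with both ends uncovered by `S`.  It has an odd number of edges, alternating between `T` and `S`,
and its reversal flips the middle edge and permutes the other edges in pairs of cancelling sign.

To find this path, let `σ`, `τ` be the involutions exchanging the ends of the edges of `S` and `T`,
and `ρ = σ τ`.  On the `ρ`-orbit of a fixed point `x` of `σ`, identified with `ℤ / N`, `σ` is
`i ↦ -i` and `τ` is `i ↦ -1 - i`.  If `N` is odd, the orbit holds exactly one fixed point of each of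
`σ` and `τ`; as `σ` has more fixed points than `τ`, some `N = 2 K` is even, and the reversal of the
path is the half-turn `i ↦ i + K`.
-/

/-- `noninvTwoPow n k w` is the number of sets of `k` pairwise disjoint
two-element subsets `{i,j}` (with `i < j`) of `{1,…,n}` such that
`w i < w j` holds for each of the `k` chosen pairs. -/
noncomputable def noninvTwoPow (n k : ℕ) (w : Equiv.Perm (Fin n)) : ℕ :=
  letI := Classical.dec
  ((Finset.univ : Finset (Finset (Finset (Fin n)))).filter
    (fun P => P.card = k ∧ (∀ p ∈ P, p.card = 2) ∧
      (∀ p ∈ P, ∀ q ∈ P, p ≠ q → p ∩ q = ∅) ∧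
      (∀ p ∈ P, ∀ i ∈ p, ∀ j ∈ p, i < j → w i < w j))).card

/-- `ν_{(2^k,1^{n-2k})} = Σ_{w ∈ S_n} noninv_{(2^k,1^{n-2k})}(w)·w` in `ℤ[S_n]`. -/
noncomputable def nuTwoPow (n k : ℕ) : MonoidAlgebra ℤ (Equiv.Perm (Fin n)) :=
  ∑ w : Equiv.Perm (Fin n), MonoidAlgebra.single w (noninvTwoPow n k w : ℤ)

/-- A set of pairwise disjoint two-element subsets of `Fin n`. -/
def IsMatch {n : ℕ} (P : Finset (Finset (Fin n))) : Prop :=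
  (∀ p ∈ P, p.card = 2) ∧ (∀ p ∈ P, ∀ q ∈ P, p ≠ q → p ∩ q = ∅)

open Classical in
/-- The sign of `w` on the edge `p`: it is `1` if `w` is increasing on `p`, and `-1` otherwise. -/
noncomputable def edgeSign {n : ℕ} (w : Equiv.Perm (Fin n)) (p : Finset (Fin n)) : ℤ :=
  if ∀ i ∈ p, ∀ j ∈ p, i < j → w i < w j then 1 else -1

/-- The product of the signs of `w` on the edges of `S`. -/
noncomputable def matchSign {n : ℕ} (w : Equiv.Perm (Fin n)) (S : Finset (Finset (Fin n))) : ℤ :=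
  ∏ p ∈ S, edgeSign w p

/-- The image of a set of edges under a permutation of the vertices. -/
def moveMatch {n : ℕ} (g : Equiv.Perm (Fin n)) (S : Finset (Finset (Fin n))) :
    Finset (Finset (Fin n)) :=
  S.image (fun p => p.image g)

/-! ### Signs of permutations on edges -/

section EdgeSigns

variable {n : ℕ}

lemma edgeSign_pair (w : Equiv.Perm (Fin n)) {a b : Fin n} (h : a < b) :
    edgeSign w {a, b} = if w a < w b then 1 else -1 := by
  unfold edgeSign
  congr 1
  simp only [Finset.mem_insert, Finset.mem_singleton, eq_iff_iff]
  constructor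
  · intro H
    exact H a (Or.inl rfl) b (Or.inr rfl) h
  · rintro H i (rfl | rfl) j (rfl | rfl) hij
    · exact absurd hij (lt_irrefl _)
    · exact H
    · exact absurd hij h.asymm
    · exact absurd hij (lt_irrefl _)

lemma edgeSign_sq (w : Equiv.Perm (Fin n)) (p : Finset (Fin n)) :
    edgeSign w p * edgeSign w p = 1 := by
  unfold edgeSign; split_ifs <;> norm_num

lemma edgeSign_one (p : Finset (Fin n)) : edgeSign 1 p = 1 := by
  unfold edgeSign; simp

lemma exists_lt_of_card_two {p : Finset (Fin n)} (hp : p.card = 2) :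
    ∃ a b, a < b ∧ p = {a, b} := by
  obtain ⟨a, b, hab, rfl⟩ := Finset.card_eq_two.mp hp
  rcases lt_or_gt_of_ne hab with h | h
  · exact ⟨a, b, h, rfl⟩
  · exact ⟨b, a, h, Finset.pair_comm a b⟩

/-- The edge sign is a cocycle for the action of permutations on edges. -/
lemma edgeSign_mul (u v : Equiv.Perm (Fin n)) {p : Finset (Fin n)} (hp : p.card = 2) :
    edgeSign (u * v) p = edgeSign u (p.image v) * edgeSign v p := by
  obtain ⟨a, b, hab, rfl⟩ := exists_lt_of_card_two hp
  have hne : v a ≠ v b := fun h => hab.ne (v.injective h)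
  have hne' : u (v a) ≠ u (v b) := fun h => hne (u.injective h)
  rw [edgeSign_pair _ hab, edgeSign_pair _ hab, Finset.image_insert, Finset.image_singleton]
  rcases lt_or_gt_of_ne hne with h | h
  · rw [edgeSign_pair _ h]
    rcases lt_or_gt_of_ne hne' with h' | h'
    · simp [h, h']
    · simp [h, h'.asymm]
  · rw [Finset.pair_comm, edgeSign_pair _ h]
    rcases lt_or_gt_of_ne hne' with h' | h'
    · simp [h.asymm, h', h'.asymm]
    · simp [h.asymm, h', h'.asymm]

lemma image_perm_injective (g : Equiv.Perm (Fin n)) :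
    Function.Injective (fun p : Finset (Fin n) => p.image g) :=
  Finset.image_injective g.injective

lemma matchSign_mul (u v : Equiv.Perm (Fin n)) {S : Finset (Finset (Fin n))} (hS : IsMatch S) :
    matchSign (u * v) S = matchSign u (moveMatch v S) * matchSign v S := by
  unfold matchSign moveMatch
  rw [Finset.prod_image (fun x _ y _ h => image_perm_injective v h), ← Finset.prod_mul_distrib]
  exact Finset.prod_congr rfl fun p hp => edgeSign_mul u v (hS.1 p hp)

lemma matchSign_one (S : Finset (Finset (Fin n))) : matchSign 1 S = 1 := by
  unfold matchSign; simp [edgeSign_one]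

lemma moveMatch_mul (g h : Equiv.Perm (Fin n)) (S : Finset (Finset (Fin n))) :
    moveMatch (g * h) S = moveMatch g (moveMatch h S) := by
  unfold moveMatch
  rw [Finset.image_image]
  congr 1
  funext p
  simp [Finset.image_image]

lemma moveMatch_one (S : Finset (Finset (Fin n))) : moveMatch 1 S = S := by
  unfold moveMatch
  simp

lemma card_moveMatch (g : Equiv.Perm (Fin n)) (S : Finset (Finset (Fin n))) :
    (moveMatch g S).card = S.card :=
  Finset.card_image_of_injective _ (image_perm_injective g)

lemma IsMatch.move {S : Finset (Finset (Fin n))} (hS : IsMatch S) (g : Equiv.Perm (Fin n)) :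
    IsMatch (moveMatch g S) := by
  unfold moveMatch
  refine ⟨?_, ?_⟩
  · intro p hp
    obtain ⟨q, hq, rfl⟩ := Finset.mem_image.mp hp
    rw [Finset.card_image_of_injective _ g.injective, hS.1 q hq]
  · intro p hp q hq hpq
    obtain ⟨p', hp', rfl⟩ := Finset.mem_image.mp hp
    obtain ⟨q', hq', rfl⟩ := Finset.mem_image.mp hq
    have hne : p' ≠ q' := by rintro rfl; exact hpq rfl
    rw [← Finset.image_inter _ _ g.injective, hS.2 p' hp' q' hq' hne, Finset.image_empty]

lemma IsMatch.subset {S T : Finset (Finset (Fin n))} (hT : IsMatch T) (h : S ⊆ T) : IsMatch S :=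
  ⟨fun p hp => hT.1 p (h hp), fun p hp q hq => hT.2 p (h hp) q (h hq)⟩

end EdgeSigns

/-! ### Counting the extensions of a matching -/

section Counting

variable {n : ℕ}

lemma exists_move_two {p q : Finset (Fin n)} (hp : p.card = 2) (hq : q.card = 2) :
    ∃ h : Equiv.Perm (Fin n), p.image h = q ∧ ∀ x, x ∉ p → x ∉ q → h x = x := by
  obtain ⟨a, b, hab, rfl⟩ := Finset.card_eq_two.mp hp
  obtain ⟨c, d, hcd, rfl⟩ := Finset.card_eq_two.mp hq
  refine ⟨Equiv.swap (Equiv.swap a c b) d * Equiv.swap a c, ?_, ?_⟩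
  · have h1 : c ≠ Equiv.swap a c b := by
      intro h
      have := congrArg (Equiv.swap a c) h
      simp at this
      exact hab this
    rw [Finset.image_insert, Finset.image_singleton]
    simp [Equiv.swap_apply_of_ne_of_ne h1 hcd]
  · intro x hx hy
    simp only [Finset.mem_insert, Finset.mem_singleton, not_or] at hx hy
    have h1 : Equiv.swap a c x = x := Equiv.swap_apply_of_ne_of_ne hx.1 hy.1
    rw [Equiv.Perm.mul_apply, h1]
    refine Equiv.swap_apply_of_ne_of_ne ?_ hy.2
    intro h
    rw [← h1] at h
    exact hx.2 ((Equiv.swap a c).injective h)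

/-- Permutations act transitively on the matchings of a given size. -/
lemma exists_move {S : Finset (Finset (Fin n))} : ∀ {T : Finset (Finset (Fin n))},
    IsMatch S → IsMatch T → S.card = T.card → ∃ g, moveMatch g S = T := by
  induction S using Finset.induction_on with
  | empty =>
    intro T _ _ h
    refine ⟨1, ?_⟩
    rw [moveMatch_one]
    exact (Finset.card_eq_zero.mp (by simpa using h.symm)).symm
  | insert p S hpS ih =>
    intro T hS hT h
    rw [Finset.card_insert_of_notMem hpS] at h
    obtain ⟨q, hq⟩ : T.Nonempty := Finset.card_pos.mp (by omega)
    obtain ⟨g, hg⟩ := ih (T := T.erase q) (hS.subset (Finset.subset_insert _ _))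
      (hT.subset (Finset.erase_subset _ _)) (by rw [Finset.card_erase_of_mem hq]; omega)
    have hp2 : (p.image g).card = 2 := by
      rw [Finset.card_image_of_injective _ g.injective]
      exact hS.1 p (Finset.mem_insert_self _ _)
    obtain ⟨h, hh, hfix⟩ := exists_move_two hp2 (hT.1 q hq)
    refine ⟨h * g, ?_⟩
    have hrest : moveMatch h (T.erase q) = T.erase q := by
      unfold moveMatch
      conv_rhs => rw [← Finset.image_id (s := T.erase q)]
      refine Finset.image_congr ?_
      intro r hr
      have hr' : r ∈ T.erase q := hr
      have hrT := Finset.mem_of_mem_erase hr'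
      have hd1 : r ∩ q = ∅ := hT.2 r hrT q hq (Finset.ne_of_mem_erase hr')
      have hd2 : r ∩ p.image g = ∅ := by
        rw [← hg] at hr'
        obtain ⟨s, hs, rfl⟩ := Finset.mem_image.mp hr'
        rw [← Finset.image_inter _ _ g.injective, hS.2 s (Finset.mem_insert_of_mem hs) p
          (Finset.mem_insert_self _ _) (by rintro rfl; exact hpS hs), Finset.image_empty]
      change r.image h = r
      conv_rhs => rw [← Finset.image_id (s := r)]
      refine Finset.image_congr ?_
      intro x hx
      have hx' : x ∈ r := hx
      refine hfix x ?_ ?_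
      · intro hx2
        have : x ∈ r ∩ p.image g := Finset.mem_inter.mpr ⟨hx', hx2⟩
        simp [hd2] at this
      · intro hx2
        have : x ∈ r ∩ q := Finset.mem_inter.mpr ⟨hx', hx2⟩
        simp [hd1] at this
    rw [moveMatch_mul]
    have : moveMatch g (insert p S) = insert (p.image g) (T.erase q) := by
      rw [← hg]; unfold moveMatch; rw [Finset.image_insert]
    rw [this]
    have : moveMatch h (insert (p.image g) (T.erase q)) = insert q (T.erase q) := by
      conv_rhs => rw [← hrest]
      unfold moveMatch; rw [Finset.image_insert, hh]
    rw [this, Finset.insert_erase hq]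

open Classical in
/-- The number of matchings with `k` edges that contain `S`. -/
noncomputable def extCount (k : ℕ) (S : Finset (Finset (Fin n))) : ℤ :=
  ((Finset.univ.filter fun P : Finset (Finset (Fin n)) =>
    (IsMatch P ∧ P.card = k) ∧ S ⊆ P).card : ℤ)

lemma moveMatch_subset_iff (g : Equiv.Perm (Fin n)) (S T : Finset (Finset (Fin n))) :
    moveMatch g S ⊆ moveMatch g T ↔ S ⊆ T :=
  Finset.image_subset_image_iff (image_perm_injective g)

lemma extCount_move (k : ℕ) (g : Equiv.Perm (Fin n)) (S : Finset (Finset (Fin n))) :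
    extCount k (moveMatch g S) = extCount k S := by
  classical
  unfold extCount
  congr 1
  symm
  refine Finset.card_bij' (fun P _ => moveMatch g P) (fun P _ => moveMatch g⁻¹ P) ?_ ?_ ?_ ?_
  · intro P hP
    simp only [Finset.mem_filter, Finset.mem_univ, true_and] at hP ⊢
    exact ⟨⟨hP.1.1.move g, by rw [card_moveMatch, hP.1.2]⟩, (moveMatch_subset_iff g _ _).mpr hP.2⟩
  · intro P hP
    simp only [Finset.mem_filter, Finset.mem_univ, true_and] at hP ⊢
    refine ⟨⟨hP.1.1.move _, by rw [card_moveMatch, hP.1.2]⟩, ?_⟩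
    rw [← moveMatch_subset_iff g, ← moveMatch_mul, mul_inv_cancel, moveMatch_one]
    exact hP.2
  · intro P _
    rw [← moveMatch_mul, inv_mul_cancel, moveMatch_one]
  · intro P _
    rw [← moveMatch_mul, mul_inv_cancel, moveMatch_one]

lemma extCount_eq_of_card_eq (k : ℕ) {S T : Finset (Finset (Fin n))} (hS : IsMatch S)
    (hT : IsMatch T) (h : S.card = T.card) : extCount k S = extCount k T := by
  obtain ⟨g, rfl⟩ := exists_move hS hT h
  rw [extCount_move]

open Classical in
/-- Expanding `∏ (1 + sign)` over the edges of each matching expresses `2 ^ k * noninv` through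
the products of edge signs over smaller matchings. -/
lemma two_pow_mul_noninv (k : ℕ) (w : Equiv.Perm (Fin n)) :
    (2 : ℤ) ^ k * (noninvTwoPow n k w : ℤ) =
      ∑ S ∈ Finset.univ.filter (fun S : Finset (Finset (Fin n)) => IsMatch S),
        extCount k S * matchSign w S := by
  have h1 : (2 : ℤ) ^ k * (noninvTwoPow n k w : ℤ) =
      ∑ P ∈ Finset.univ.filter (fun P : Finset (Finset (Fin n)) => IsMatch P ∧ P.card = k),
        ∏ p ∈ P, (1 + edgeSign w p) := by
    have h2 : noninvTwoPow n k w = ((Finset.univ.filter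
        (fun P : Finset (Finset (Fin n)) => IsMatch P ∧ P.card = k)).filter
        (fun P => ∀ p ∈ P, ∀ i ∈ p, ∀ j ∈ p, i < j → w i < w j)).card := by
      unfold noninvTwoPow
      rw [Finset.filter_filter]
      congr 1
      ext P
      simp only [Finset.mem_filter, Finset.mem_univ, true_and]
      unfold IsMatch
      -- the two intersections are taken with respect to different decidability instances
      constructor
      · rintro ⟨h1, h2, h3, h4⟩
        refine ⟨⟨⟨h2, ?_⟩, h1⟩, h4⟩
        intro p hp q hq hpq
        convert h3 p hp q hq hpq
      · rintro ⟨⟨⟨h2, h3⟩, h1⟩, h4⟩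
        refine ⟨h1, h2, ?_, h4⟩
        intro p hp q hq hpq
        convert h3 p hp q hq hpq
    rw [h2, Finset.card_filter, Nat.cast_sum, Finset.mul_sum]
    refine Finset.sum_congr rfl fun P hP => ?_
    have hk : P.card = k := (Finset.mem_filter.mp hP).2.2
    split_ifs with hinc
    · rw [Finset.prod_congr rfl (g := fun _ => (2 : ℤ)), Finset.prod_const, hk]
      · simp
      · intro p hp
        unfold edgeSign
        rw [if_pos (hinc p hp)]; norm_num
    · push Not at hinc
      obtain ⟨p, hp, i, hi, j, hj, hij, hw⟩ := hinc
      rw [Finset.prod_eq_zero hp]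
      · simp
      · unfold edgeSign
        rw [if_neg]
        · norm_num
        · intro H
          exact absurd (H i hi j hj hij) (not_lt.mpr hw)
  rw [h1]
  simp_rw [Finset.prod_one_add]
  have h3 : ∀ S : Finset (Finset (Fin n)), extCount k S * matchSign w S =
      ∑ P ∈ Finset.univ.filter
        (fun P : Finset (Finset (Fin n)) => (IsMatch P ∧ P.card = k) ∧ S ⊆ P), matchSign w S := by
    intro S
    rw [Finset.sum_const, nsmul_eq_mul]; rfl
  simp_rw [h3]
  refine Finset.sum_comm' ?_
  intro P S
  simp only [Finset.mem_filter, Finset.mem_univ, true_and, Finset.mem_powerset]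
  constructor
  · rintro ⟨hP, hS⟩
    exact ⟨⟨hP, hS⟩, hP.1.subset hS⟩
  · rintro ⟨h, _⟩
    exact h

end Counting

/-! ### Superposing two matchings -/

section Superposition

variable {n : ℕ}

/-- If the involution `g` preserves a set of edges and flips none of them, its sign there is `1`. -/
lemma prod_edgeSign_eq_one {g : Equiv.Perm (Fin n)} (hgg : g * g = 1)
    {T : Finset (Finset (Fin n))} (h2 : ∀ p ∈ T, p.card = 2)
    (hT : ∀ p ∈ T, p.image g ∈ T) (hflip : ∀ p ∈ T, p.image g = p → edgeSign g p = 1) :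
    ∏ p ∈ T, edgeSign g p = 1 := by
  refine Finset.prod_involution (fun p _ => p.image g) ?_ ?_ hT ?_
  · intro p hp
    have := edgeSign_mul g g (h2 p hp)
    rw [hgg, edgeSign_one] at this
    rw [mul_comm]; exact this.symm
  · intro p hp hne heq
    exact hne (hflip p hp heq)
  · intro p hp
    rw [Finset.image_image, ← Equiv.Perm.coe_mul, hgg]
    simp

/-- The edges of a matching are the two-cycles of an involution. -/
lemma IsMatch.exists_involution {S : Finset (Finset (Fin n))} (hS : IsMatch S) :
    ∃ σ : Equiv.Perm (Fin n), σ * σ = 1 ∧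
      ∀ x y, x ≠ y → (({x, y} : Finset (Fin n)) ∈ S ↔ σ x = y) := by
  classical
  have huniq : ∀ x y z : Fin n, x ≠ y → x ≠ z → ({x, y} : Finset (Fin n)) ∈ S →
      ({x, z} : Finset (Fin n)) ∈ S → y = z := by
    intro x y z hxy hxz hy hz
    by_contra hyz
    have hne : ({x, y} : Finset (Fin n)) ≠ {x, z} := by
      intro h
      have : y ∈ ({x, z} : Finset (Fin n)) := by rw [← h]; simp
      simp only [Finset.mem_insert, Finset.mem_singleton] at this
      rcases this with h | h
      · exact hxy h.symm
      · exact hyz h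
    have h := hS.2 _ hy _ hz hne
    have : x ∈ ({x, y} : Finset (Fin n)) ∩ {x, z} := by simp
    rw [h] at this
    simp at this
  have hex : ∀ x : Fin n, ∃ y, (x ≠ y ∧ ({x, y} : Finset (Fin n)) ∈ S) ∨
      (x = y ∧ ∀ z, x ≠ z → ({x, z} : Finset (Fin n)) ∉ S) := by
    intro x
    by_cases h : ∃ y, x ≠ y ∧ ({x, y} : Finset (Fin n)) ∈ S
    · obtain ⟨y, hy⟩ := h
      exact ⟨y, Or.inl hy⟩
    · push Not at h
      exact ⟨x, Or.inr ⟨rfl, h⟩⟩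
  choose f hf using hex
  have hf1 : ∀ x y, x ≠ y → (({x, y} : Finset (Fin n)) ∈ S ↔ f x = y) := by
    intro x y hxy
    rcases hf x with h | h
    · constructor
      · intro hy
        exact huniq x _ _ h.1 hxy h.2 hy
      · rintro rfl
        exact h.2
    · constructor
      · intro hy
        exact absurd hy (h.2 y hxy)
      · intro hy
        exact absurd (h.1.trans hy) hxy
  have hinv : Function.Involutive f := by
    intro x
    by_cases h : f x = x
    · rw [h, h]
    · rw [← hf1 _ _ h, Finset.pair_comm, hf1 _ _ (Ne.symm h)]
  refine ⟨hinv.toPerm f, ?_, ?_⟩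
  · ext x
    simp [hinv x]
  · intro x y hxy
    exact hf1 x y hxy

lemma card_fixed_add {S : Finset (Finset (Fin n))} (hS : IsMatch S) {σ : Equiv.Perm (Fin n)}
    (hσ : ∀ x y, x ≠ y → (({x, y} : Finset (Fin n)) ∈ S ↔ σ x = y)) :
    (Finset.univ.filter fun x => σ x = x).card + 2 * S.card = n := by
  have h1 : (Finset.univ.filter fun x => ¬ σ x = x) = S.biUnion id := by
    ext x
    simp only [Finset.mem_filter, Finset.mem_univ, true_and, Finset.mem_biUnion, id]
    constructor
    · intro hx
      exact ⟨{x, σ x}, (hσ x (σ x) (Ne.symm hx)).mpr rfl, by simp⟩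
    · rintro ⟨p, hp, hx⟩
      obtain ⟨a, b, hab, rfl⟩ := Finset.card_eq_two.mp (hS.1 p hp)
      simp only [Finset.mem_insert, Finset.mem_singleton] at hx
      rcases hx with rfl | rfl
      · rw [(hσ _ _ hab).mp hp]; exact hab.symm
      · rw [Finset.pair_comm] at hp
        rw [(hσ _ _ hab.symm).mp hp]; exact hab
  have h2 : (S.biUnion id).card = 2 * S.card := by
    rw [Finset.card_biUnion, Finset.sum_congr rfl (g := fun _ => 2), Finset.sum_const]
    · simp [mul_comm]
    · intro p hp; exact hS.1 p hp
    · intro p hp q hq hpq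
      exact Finset.disjoint_iff_inter_eq_empty.mpr (hS.2 p hp q hq hpq)
  have h3 := Finset.card_filter_add_card_filter_not (s := (Finset.univ : Finset (Fin n)))
    (fun x => σ x = x)
  rw [h1, h2] at h3
  simpa using h3

/-- A permutation commuting with the attached involution preserves the matching. -/
lemma image_mem_of_commute {S : Finset (Finset (Fin n))} (hS : IsMatch S) {σ : Equiv.Perm (Fin n)}
    (hσ : ∀ x y, x ≠ y → (({x, y} : Finset (Fin n)) ∈ S ↔ σ x = y)) {g : Equiv.Perm (Fin n)}
    (hg : ∀ x, σ (g x) = g (σ x)) : ∀ p ∈ S, p.image g ∈ S := by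
  intro p hp
  obtain ⟨a, b, hab, rfl⟩ := Finset.card_eq_two.mp (hS.1 p hp)
  rw [Finset.image_insert, Finset.image_singleton, hσ _ _ (fun h => hab (g.injective h)), hg,
    (hσ _ _ hab).mp hp]

lemma moveMatch_eq_self {S : Finset (Finset (Fin n))} {g : Equiv.Perm (Fin n)}
    (h : ∀ p ∈ S, p.image g ∈ S) : moveMatch g S = S := by
  refine Finset.eq_of_subset_of_card_le ?_ (card_moveMatch g S).ge
  intro p hp
  obtain ⟨q, hq, rfl⟩ := Finset.mem_image.mp hp
  exact h q hq

/-- The sign on a matching of the half-turn `g` of an orbit `z`, indexed by integers modulo `2 * K`,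
on which the attached involution acts as the reflection `i ↦ c - i`.  The half-turn flips exactly
one edge if `K - c` is even, and no edge otherwise. -/
lemma matchSign_halfTurn {S : Finset (Finset (Fin n))} (hS : IsMatch S) {σ g : Equiv.Perm (Fin n)}
    (hσ : ∀ x y, x ≠ y → (({x, y} : Finset (Fin n)) ∈ S ↔ σ x = y))
    (hgg : g * g = 1) (hg : ∀ x, σ (g x) = g (σ x))
    {z : ℤ → Fin n} {K c : ℤ} (hK : 0 < K) (hz : ∀ i j, z i = z j ↔ 2 * K ∣ i - j)
    (hgz : ∀ i, g (z i) = z (i + K)) (hgf : ∀ y, (∀ i, y ≠ z i) → g y = y)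
    (hσz : ∀ i, σ (z i) = z (c - i)) :
    matchSign g S = if Even (K - c) then -1 else 1 := by
  have himg := image_mem_of_commute hS hσ hg
  -- a flipped edge lies in the orbit, at an index solving `2 * i ≡ c - K` modulo `2 * K`
  have hflip : ∀ p ∈ S, p.image g = p → edgeSign g p ≠ 1 →
      ∃ i, 2 * K ∣ 2 * i + K - c ∧ p = {z i, σ (z i)} := by
    intro p hp hgp hs
    obtain ⟨a, b, hab, rfl⟩ := exists_lt_of_card_two (hS.1 p hp)
    have hab' := (hσ _ _ hab.ne).mp hp
    have hga : g a = b := by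
      have h1 : g a ∈ ({a, b} : Finset (Fin n)) := by rw [← hgp]; simp
      have h2 : g b ∈ ({a, b} : Finset (Fin n)) := by rw [← hgp]; simp
      simp only [Finset.mem_insert, Finset.mem_singleton] at h1 h2
      rcases h1 with h1 | h1
      · exfalso
        rcases h2 with h2 | h2
        · exact hab.ne (g.injective (h1.trans h2.symm))
        · apply hs
          rw [edgeSign_pair _ hab, h1, h2, if_pos hab]
      · exact h1
    have hin : ∃ i, a = z i := by
      by_contra hno
      push Not at hno
      exact hab.ne ((hgf a hno).symm.trans hga)
    obtain ⟨i, rfl⟩ := hin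
    refine ⟨i, ?_, by rw [hab']⟩
    have h3 : z (i + K) = z (c - i) := by rw [← hgz, ← hσz, hga, hab']
    have h4 := (hz _ _).mp h3
    have h5 : i + K - (c - i) = 2 * i + K - c := by ring
    rwa [h5] at h4
  unfold matchSign
  split_ifs with hev
  · obtain ⟨d, hd⟩ := hev
    have hs0 : σ (z (-d)) = z (K - d) := by
      rw [hσz]; congr 1; linarith
    have hne : z (-d) ≠ z (K - d) := by
      rw [Ne, hz]
      rintro ⟨m, hm⟩
      have h6 : K * (2 * m + 1) = 0 := by linarith
      rcases mul_eq_zero.mp h6 with h | h <;> omega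
    set p₀ : Finset (Fin n) := {z (-d), z (K - d)} with hp₀
    have hp₀S : p₀ ∈ S := (hσ _ _ hne).mpr hs0
    have hg1 : g (z (-d)) = z (K - d) := by rw [hgz]; congr 1; ring
    have hg2 : g (z (K - d)) = z (-d) := by
      rw [← hg1, ← Equiv.Perm.mul_apply, hgg, Equiv.Perm.one_apply]
    have hgp₀ : p₀.image g = p₀ := by
      rw [hp₀, Finset.image_insert, Finset.image_singleton, hg1, hg2, Finset.pair_comm]
    have hsign : edgeSign g p₀ = -1 := by
      rcases lt_or_gt_of_ne hne with h | h
      · rw [hp₀, edgeSign_pair _ h, hg1, hg2, if_neg h.asymm]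
      · rw [hp₀, Finset.pair_comm, edgeSign_pair _ h, hg1, hg2, if_neg h.asymm]
    rw [← Finset.mul_prod_erase _ _ hp₀S, hsign, prod_edgeSign_eq_one hgg, mul_one]
    · intro p hp; exact hS.1 p (Finset.mem_of_mem_erase hp)
    · intro p hp
      refine Finset.mem_erase.mpr ⟨?_, himg p (Finset.mem_of_mem_erase hp)⟩
      intro h
      rw [← hgp₀] at h
      exact Finset.ne_of_mem_erase hp (image_perm_injective g h)
    · intro p hp hgp
      by_contra hs
      obtain ⟨i, ⟨m, hm⟩, hi⟩ := hflip p (Finset.mem_of_mem_erase hp) hgp hs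
      apply Finset.ne_of_mem_erase hp
      have hid : i + d = K * m := by linarith
      -- `i ≡ -d` modulo `K`, hence `i` is `-d` or `K - d` modulo `2 * K`
      rcases Int.even_or_odd m with ⟨r, hr⟩ | ⟨r, hr⟩
      · have : z i = z (-d) := by
          rw [hz]; exact ⟨r, by subst hr; linarith⟩
        rw [hi, this, hs0]
      · have : z i = z (K - d) := by
          rw [hz]; exact ⟨r, by subst hr; linarith⟩
        have hs1 : σ (z (K - d)) = z (-d) := by
          rw [hσz]; congr 1; linarith
        rw [hi, this, hs1, Finset.pair_comm]
  · refine prod_edgeSign_eq_one hgg hS.1 himg ?_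
    intro p hp hgp
    by_contra hs
    obtain ⟨i, ⟨m, hm⟩, hi⟩ := hflip p hp hgp hs
    exact hev ⟨K * m - i, by linarith⟩

/-- Two matchings `S`, `T` with `T` larger than `S` are both preserved by an involution whose signs
on `S` and `T` are opposite: the reversal of a path component of `S ∪ T` with both ends
uncovered by `S`. -/
lemma exists_opposite_signs_of_lt {S T : Finset (Finset (Fin n))} (hS : IsMatch S)
    (hT : IsMatch T) (hlt : S.card < T.card) :
    ∃ g : Equiv.Perm (Fin n), g * g = 1 ∧ moveMatch g S = S ∧ moveMatch g T = T ∧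
      matchSign g S * matchSign g T = -1 := by
  classical
  obtain ⟨σ, hσσ, hσ⟩ := hS.exists_involution
  obtain ⟨τ, hττ, hτ⟩ := hT.exists_involution
  have hcard : (Finset.univ.filter fun x => τ x = x).card <
      (Finset.univ.filter fun x => σ x = x).card := by
    have h1 := card_fixed_add hS hσ
    have h2 := card_fixed_add hT hτ
    omega
  set ρ : Equiv.Perm (Fin n) := σ * τ with hρ
  have hσinv : σ⁻¹ = σ := inv_eq_of_mul_eq_one_right hσσ
  have hτinv : τ⁻¹ = τ := inv_eq_of_mul_eq_one_right hττ
  have hsemi : SemiconjBy σ ρ ρ⁻¹ := by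
    change σ * ρ = ρ⁻¹ * σ
    rw [hρ, mul_inv_rev, hσinv, hτinv, mul_assoc τ, hσσ, ← mul_assoc, hσσ, one_mul, mul_one]
  have hσρ : ∀ (i : ℤ) (x : Fin n), σ ((ρ ^ i) x) = (ρ ^ (-i)) (σ x) := by
    intro i x
    have := (hsemi.zpow_right i).eq
    rw [inv_zpow'] at this
    rw [← Equiv.Perm.mul_apply, this, Equiv.Perm.mul_apply]
  have hτeq : τ = σ * ρ := by rw [hρ, ← mul_assoc, hσσ, one_mul]
  have hτρ : ∀ (i : ℤ) (x : Fin n), σ x = x → τ ((ρ ^ i) x) = (ρ ^ (-1 - i)) x := by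
    intro i x hx
    rw [hτeq, Equiv.Perm.mul_apply, ← Equiv.Perm.mul_apply ρ, ← zpow_one_add, hσρ, hx,
      neg_add']
  have hper : ∀ (x : Fin n) (i j : ℤ),
      (ρ ^ i) x = (ρ ^ j) x ↔ (MulAction.period ρ x : ℤ) ∣ i - j := by
    intro x i j
    rw [← MulAction.zpow_smul_eq_iff_period_dvd, Equiv.Perm.smul_def, sub_eq_neg_add, zpow_add,
      Equiv.Perm.mul_apply, zpow_neg, Equiv.Perm.inv_eq_iff_eq]
  -- if all these periods `N` were odd, `x ↦ ρ ^ (N / 2) x` would embed `Fix σ` into `Fix τ`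
  obtain ⟨x₀, hx₀, hev⟩ : ∃ x₀, σ x₀ = x₀ ∧ Even (MulAction.period ρ x₀) := by
    by_contra hno
    push Not at hno
    refine absurd hcard (not_lt.mpr ?_)
    refine Finset.card_le_card_of_injOn
      (fun x => (ρ ^ ((MulAction.period ρ x / 2 : ℕ) : ℤ)) x) ?_ ?_
    · intro x hx
      have hx' : σ x = x := by simpa using hx
      have hodd := Nat.not_even_iff_odd.mp (hno x hx')
      obtain ⟨q, hq⟩ := hodd
      simp only [Finset.coe_filter, Finset.mem_univ, true_and, Set.mem_ofPred_eq]
      rw [hτρ _ _ hx', hper]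
      refine ⟨-1, ?_⟩
      omega
    · intro x hx y hy hxy
      have hx' : σ x = x := by simpa using hx
      have hy' : σ y = y := by simpa using hy
      have hodd := Nat.not_even_iff_odd.mp (hno x hx')
      simp only at hxy
      generalize ((MulAction.period ρ x / 2 : ℕ) : ℤ) = a at hxy
      generalize ((MulAction.period ρ y / 2 : ℕ) : ℤ) = b at hxy
      have hy2 : y = (ρ ^ (-b + a)) x := by
        rw [zpow_add, Equiv.Perm.mul_apply, hxy, ← Equiv.Perm.mul_apply, ← zpow_add,
          neg_add_cancel, zpow_zero, Equiv.Perm.one_apply]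
      generalize -b + a = i at hy2
      have h1 : (ρ ^ i) x = (ρ ^ (-i)) x := by
        rw [← hy2, ← hy', hy2, hσρ, hx']
      have h2 := (hper x _ _).mp h1
      have h3 : i - -i = 2 * i := by ring
      rw [h3] at h2
      have h4 : (MulAction.period ρ x : ℤ) ∣ i := by
        refine IsCoprime.dvd_of_dvd_mul_left ?_ h2
        rw [← Nat.cast_ofNat (R := ℤ), Nat.isCoprime_iff_coprime]
        exact hodd.coprime_two_right
      have h5 := (hper x i 0).mpr (by simpa using h4)
      rw [hy2, h5]; simp
  obtain ⟨K, hK⟩ := hev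
  have hNpos : 0 < MulAction.period ρ x₀ :=
    MulAction.period_pos_of_orderOf_pos (orderOf_pos ρ) x₀
  have hKpos : (0 : ℤ) < (K : ℤ) := by omega
  set z : ℤ → Fin n := fun i => (ρ ^ i) x₀ with hzdef
  have hz : ∀ i j, z i = z j ↔ 2 * (K : ℤ) ∣ i - j := by
    intro i j
    rw [hzdef]
    simp only
    rw [hper, hK]
    push_cast
    rw [two_mul]
  have hσz : ∀ i, σ (z i) = z (0 - i) := by
    intro i
    simp only [hzdef, hσρ, hx₀, zero_sub]
  have hτz : ∀ i, τ (z i) = z (-1 - i) := fun i => hτρ i x₀ hx₀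
  have hρz : ∀ i, (ρ ^ (K : ℤ)) (z i) = z (i + K) := by
    intro i
    simp only [hzdef]
    rw [← Equiv.Perm.mul_apply, ← zpow_add, add_comm]
  let f : Fin n → Fin n := fun y => if ∃ i, y = z i then (ρ ^ (K : ℤ)) y else y
  have hfz : ∀ i, f (z i) = z (i + K) := by
    intro i
    simp only [f]
    rw [if_pos ⟨i, rfl⟩, hρz]
  have hfn : ∀ y, (∀ i, y ≠ z i) → f y = y := by
    intro y hy
    simp only [f]
    rw [if_neg]
    rintro ⟨i, hi⟩
    exact hy i hi
  have hinv : Function.Involutive f := by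
    intro y
    by_cases hy : ∃ i, y = z i
    · obtain ⟨i, rfl⟩ := hy
      rw [hfz, hfz, hz]
      exact ⟨1, by ring⟩
    · push Not at hy
      rw [hfn y hy, hfn y hy]
  -- reflections of the orbit commute with the half-turn
  have hcomm : ∀ (c : ℤ) (θ : Equiv.Perm (Fin n)), θ * θ = 1 → (∀ i, θ (z i) = z (c - i)) →
      ∀ x, θ (f x) = f (θ x) := by
    intro c θ hθ hθz x
    by_cases hx : ∃ i, x = z i
    · obtain ⟨i, rfl⟩ := hx
      rw [hfz, hθz, hθz, hfz, hz]
      exact ⟨-1, by ring⟩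
    · have hx' : ∀ i, θ x ≠ z i := by
        intro i hi
        apply hx
        refine ⟨c - i, ?_⟩
        rw [← hθz, ← hi, ← Equiv.Perm.mul_apply, hθ, Equiv.Perm.one_apply]
      push Not at hx
      rw [hfn x hx, hfn _ hx']
  have hgg : (hinv.toPerm f) * (hinv.toPerm f) = 1 := by
    ext x
    simp [hinv x]
  have hcσ : ∀ x, σ ((hinv.toPerm f) x) = (hinv.toPerm f) (σ x) := hcomm 0 σ hσσ hσz
  have hcτ : ∀ x, τ ((hinv.toPerm f) x) = (hinv.toPerm f) (τ x) := hcomm (-1) τ hττ hτz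
  refine ⟨(hinv.toPerm f), hgg, moveMatch_eq_self (image_mem_of_commute hS hσ hcσ),
    moveMatch_eq_self (image_mem_of_commute hT hτ hcτ), ?_⟩
  rw [matchSign_halfTurn hS hσ hgg hcσ hKpos hz hfz hfn hσz,
    matchSign_halfTurn hT hτ hgg hcτ hKpos hz hfz hfn hτz]
  by_cases h : Even (K : ℤ)
  · have h' : ¬ Even ((K : ℤ) - -1) := by
      rw [sub_neg_eq_add, Int.even_add_one]; simpa using h
    rw [if_pos (by simpa using h), if_neg h']; norm_num
  · have h' : Even ((K : ℤ) - -1) := by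
      rw [sub_neg_eq_add, Int.even_add_one]; exact h
    rw [if_neg (by simpa using h), if_pos h']; norm_num

lemma exists_opposite_signs {S T : Finset (Finset (Fin n))} (hS : IsMatch S)
    (hT : IsMatch T) (hne : S.card ≠ T.card) :
    ∃ g : Equiv.Perm (Fin n), g * g = 1 ∧ moveMatch g S = S ∧ moveMatch g T = T ∧
      matchSign g S * matchSign g T = -1 := by
  rcases lt_or_gt_of_ne hne with h | h
  · exact exists_opposite_signs_of_lt hS hT h
  · obtain ⟨g, h1, h2, h3, h4⟩ := exists_opposite_signs_of_lt hT hS h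
    exact ⟨g, h1, h3, h2, by rw [mul_comm]; exact h4⟩

end Superposition

/-! ### Products in the group algebra -/

section GroupAlgebra

variable {n : ℕ}

/-- The element of `ℤ[S_n]` whose coefficient at `w` is the sign of `w` on `S`. -/
noncomputable def signElt (S : Finset (Finset (Fin n))) : MonoidAlgebra ℤ (Equiv.Perm (Fin n)) :=
  ∑ w : Equiv.Perm (Fin n), MonoidAlgebra.single w (matchSign w S)

/-- For matchings of different sizes the terms of the product cancel in pairs
`(u, v) ↔ (u * g, g * v)`, where `g` is an involution with opposite signs on `S` and `v T`. -/
lemma signElt_mul_eq_zero {S T : Finset (Finset (Fin n))} (hS : IsMatch S) (hT : IsMatch T)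
    (hne : S.card ≠ T.card) : signElt S * signElt T = 0 := by
  have hex : ∀ T' : Finset (Finset (Fin n)), ∃ g : Equiv.Perm (Fin n),
      IsMatch T' → S.card ≠ T'.card → (g * g = 1 ∧ moveMatch g S = S ∧ moveMatch g T' = T' ∧
      matchSign g S * matchSign g T' = -1) := by
    intro T'
    by_cases h : IsMatch T' ∧ S.card ≠ T'.card
    · obtain ⟨g, hg⟩ := exists_opposite_signs hS h.1 h.2
      exact ⟨g, fun _ _ => hg⟩
    · exact ⟨1, fun h1 h2 => absurd ⟨h1, h2⟩ h⟩
  choose G hG using hex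
  have hG' : ∀ v : Equiv.Perm (Fin n), _ := fun v =>
    hG (moveMatch v T) (hT.move v) (by rwa [card_moveMatch])
  unfold signElt
  rw [Finset.sum_mul_sum, ← Finset.sum_product']
  simp_rw [MonoidAlgebra.single_mul_single]
  refine Finset.sum_involution
    (fun a _ => (a.1 * G (moveMatch a.2 T), G (moveMatch a.2 T) * a.2)) ?_ ?_ ?_ ?_
  · rintro ⟨u, v⟩ _
    obtain ⟨h1, h2, h3, h4⟩ := hG' v
    simp only
    rw [matchSign_mul u _ hS, h2, matchSign_mul _ v hT]
    have h5 : u * G (moveMatch v T) * (G (moveMatch v T) * v) = u * v := by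
      rw [mul_assoc, ← mul_assoc (G _), h1, one_mul]
    rw [h5, ← MonoidAlgebra.single_add]
    have h6 : matchSign u S * matchSign v T + matchSign u S * matchSign (G (moveMatch v T)) S *
        (matchSign (G (moveMatch v T)) (moveMatch v T) * matchSign v T) = 0 := by
      linear_combination (matchSign u S * matchSign v T) * h4
    rw [h6, MonoidAlgebra.single_zero]
  · rintro ⟨u, v⟩ _ _ heq
    obtain ⟨h1, h2, h3, h4⟩ := hG' v
    have h7 : G (moveMatch v T) = 1 := by
      have := congrArg Prod.fst heq
      simpa using this
    rw [h7, matchSign_one, matchSign_one] at h4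
    norm_num at h4
  · intro a _; simp
  · rintro ⟨u, v⟩ _
    obtain ⟨h1, h2, h3, h4⟩ := hG' v
    simp only
    rw [moveMatch_mul, h3, mul_assoc, h1, mul_one, ← mul_assoc, h1, one_mul]

open Classical in
lemma two_pow_smul_nu (k : ℕ) : (2 : ℤ) ^ k • nuTwoPow n k =
    ∑ S ∈ Finset.univ.filter (fun S : Finset (Finset (Fin n)) => IsMatch S),
      extCount k S • signElt S := by
  unfold nuTwoPow signElt
  simp_rw [Finset.smul_sum, MonoidAlgebra.smul_single, smul_eq_mul]
  rw [Finset.sum_comm]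
  refine Finset.sum_congr rfl fun w _ => ?_
  rw [two_pow_mul_noninv]
  exact map_sum (MonoidAlgebra.singleAddHom w) _ _

end GroupAlgebra

/-- The operators `ν_{(2^k,1^{n-2k})}` pairwise commute in `ℤ[S_n]`. -/
theorem nuTwoPow_commute (n k l : ℕ) (hn : 1 ≤ n) (hk : k ≤ n / 2) (hl : l ≤ n / 2) :
    nuTwoPow n k * nuTwoPow n l = nuTwoPow n l * nuTwoPow n k := by
  classical
  have h : ((2 : ℤ) ^ k • nuTwoPow n k) * ((2 : ℤ) ^ l • nuTwoPow n l) =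
      ((2 : ℤ) ^ l • nuTwoPow n l) * ((2 : ℤ) ^ k • nuTwoPow n k) := by
    simp_rw [two_pow_smul_nu, Finset.sum_mul_sum]
    refine Finset.sum_congr rfl fun S hS => Finset.sum_congr rfl fun T hT => ?_
    have hS' : IsMatch S := (Finset.mem_filter.mp hS).2
    have hT' : IsMatch T := (Finset.mem_filter.mp hT).2
    rw [smul_mul_smul_comm, smul_mul_smul_comm]
    by_cases hc : S.card = T.card
    · rw [extCount_eq_of_card_eq k hS' hT' hc, extCount_eq_of_card_eq l hS' hT' hc, mul_comm]
    · rw [signElt_mul_eq_zero hS' hT' hc, smul_zero, smul_zero]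
  rw [smul_mul_smul_comm, smul_mul_smul_comm, mul_comm ((2 : ℤ) ^ l)] at h
  -- `ℤ[S_n]` is torsion-free
  exact smul_right_injective _ (by positivity : (2 : ℤ) ^ k * 2 ^ l ≠ 0) h
end

section
/- Let K be a field of characteristic zero, let A be an n×n matrix with integer entries, viewed as a K-linear endomorphism of K^n, and let W be a finite group acting K-linearly on K^n in such a way that the action of every element of W commutes with A. Let U ⊆ K^n be a subspace invariant under A and under the action of W, and suppose that as a K[W]-module U is a direct sum of simple submodules which are pairwise non-isomorphic and each of which admits only scalar multiples of the identity as K[W]-module endomorphisms. Then the restriction of A to U is diagonalizable over K, and every eigenvalue λ ∈ K of A on U (i.e., every λ with A·u = λ·u for some nonzero u ∈ U) is integral over ℤ. -/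
/-!
The endomorphism `A` of `U = ⨁ S i` commutes with `W`, so each of its blocks `S i → S j`, obtained
by restricting to `S i` and projecting to `S j`, is `W`-equivariant.  By Schur's lemma
(`equivariant_eq_zero`) the off-diagonal blocks vanish, since the summands are simple and pairwise
non-isomorphic; hence `A` preserves every `S i` (`map_mem_summand`).  The diagonal blocks are
scalars by hypothesis, so `U` is spanned by eigenspaces of `A`.  Integrality of the eigenvalues
only uses that they are roots of any monic integer polynomial annihilating `A`, which exists by
Cayley-Hamilton (`isIntegral_of_mulVec_eq`).
-/

section Schur

variable {K E W : Type*} [Field K] [AddCommGroup E] [Module K E] [Group W]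

/-- Schur's lemma for invariant subspaces of one representation: the kernel and the range of an
equivariant map are invariant, so by simplicity it is zero or an isomorphism; the latter is excluded
when the subspaces are not isomorphic as representations. -/
theorem equivariant_eq_zero (ρ : W →* (E →ₗ[K] E)) {S₁ S₂ : Submodule K E}
    (h₁ : ∀ (g : W), ∀ x ∈ S₁, ρ g x ∈ S₁)
    (hs₁ : ∀ T : Submodule K E, T ≤ S₁ → (∀ (g : W), ∀ x ∈ T, ρ g x ∈ T) → T = ⊥ ∨ T = S₁)
    (hs₂ : ∀ T : Submodule K E, T ≤ S₂ → (∀ (g : W), ∀ x ∈ T, ρ g x ∈ T) → T = ⊥ ∨ T = S₂)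
    (hn : ¬ ∃ e : S₁ ≃ₗ[K] S₂, ∀ (g : W) (x : S₁), (e ⟨ρ g ↑x, h₁ g ↑x x.2⟩ : E) = ρ g ↑(e x))
    (f : S₁ →ₗ[K] S₂)
    (hf : ∀ (g : W) (x : S₁), (f ⟨ρ g ↑x, h₁ g ↑x x.2⟩ : E) = ρ g ↑(f x)) : f = 0 := by
  have hker := hs₁ ((LinearMap.ker f).map S₁.subtype) (Submodule.map_subtype_le _ _) (by
    rintro g _ ⟨x, hx, rfl⟩
    refine ⟨⟨ρ g ↑x, h₁ g ↑x x.2⟩, ?_, rfl⟩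
    have hx' : f x = 0 := hx
    change f _ = 0
    apply Subtype.ext
    rw [hf, hx']
    simp)
  have hran := hs₂ ((LinearMap.range f).map S₂.subtype) (Submodule.map_subtype_le _ _) (by
    rintro g _ ⟨_, ⟨x, rfl⟩, rfl⟩
    exact ⟨_, ⟨⟨ρ g ↑x, h₁ g ↑x x.2⟩, rfl⟩, hf g x⟩)
  rcases hran with hran | hran
  · replace hran := Submodule.map_injective_of_injective S₂.injective_subtype
      (hran.trans (Submodule.map_bot _).symm)
    exact LinearMap.range_eq_bot.mp hran
  rcases hker with hker | hker
  · replace hker := Submodule.map_injective_of_injective S₁.injective_subtype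
      (hker.trans (Submodule.map_bot _).symm)
    have hsurj : LinearMap.range f = ⊤ := by
      apply Submodule.map_injective_of_injective S₂.injective_subtype
      rw [hran, Submodule.map_subtype_top]
    exact (hn ⟨LinearEquiv.ofBijective f
      ⟨LinearMap.ker_eq_bot.mp hker, LinearMap.range_eq_top.mp hsurj⟩, hf⟩).elim
  · apply LinearMap.ker_eq_top.mp
    apply Submodule.map_injective_of_injective S₁.injective_subtype
    rw [hker, Submodule.map_subtype_top]

/-- An endomorphism commuting with the group preserves each summand of a multiplicity-free
decomposition into simple invariant subspaces. -/
theorem map_mem_summand (ρ : W →* (E →ₗ[K] E)) (a : E →ₗ[K] E)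
    (ha : ∀ g x, ρ g (a x) = a (ρ g x))
    {ι : Type*} (S : ι → Submodule K E)
    (haU : ∀ x ∈ ⨆ i, S i, a x ∈ ⨆ i, S i)
    (hSW : ∀ i (g : W), ∀ x ∈ S i, ρ g x ∈ S i)
    (hindep : iSupIndep S)
    (hsimple : ∀ i, ∀ T : Submodule K E, T ≤ S i →
      (∀ (g : W), ∀ x ∈ T, ρ g x ∈ T) → T = ⊥ ∨ T = S i)
    (hnoniso : ∀ i₁ i₂, i₁ ≠ i₂ →
      ¬ ∃ e : (S i₁) ≃ₗ[K] (S i₂), ∀ (g : W) (x : S i₁),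
        (e ⟨ρ g ↑x, hSW i₁ g ↑x x.2⟩ : E) = ρ g ↑(e x))
    (i : ι) (x : E) (hx : x ∈ S i) : a x ∈ S i := by
  classical
  let L : (Π₀ i, S i) →ₗ[K] E := DFinsupp.lsum ℕ (fun i => (S i).subtype)
  have hL : Function.Injective L := hindep.dfinsupp_lsum_injective
  have hrange : ∀ y ∈ ⨆ i, S i, y ∈ LinearMap.range L := fun y hy => by
    rw [Submodule.iSup_eq_range_dfinsupp_lsum] at hy
    exact hy
  let e := LinearEquiv.ofInjective L hL
  have he : ∀ y, L (e.symm y) = y := fun y => congrArg Subtype.val (e.apply_symm_apply y)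
  -- `G g` is the action of `g` on the external direct sum.
  let G : W → (Π₀ i, S i) →ₗ[K] (Π₀ i, S i) := fun g =>
    DFinsupp.mapRange.linearMap (fun i => (ρ g).restrict (hSW i g))
  have hG : ∀ g v, L (G g v) = ρ g (L v) := by
    intro g v
    have : L ∘ₗ G g = ρ g ∘ₗ L := by
      ext j y
      simp [L, G]
    exact LinearMap.congr_fun this v
  have hmem : ∀ y : S i, a y ∈ LinearMap.range L := fun y =>
    hrange _ (haU _ (Submodule.mem_iSup_of_mem i y.2))
  let F : S i →ₗ[K] (Π₀ i, S i) :=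
    e.symm.toLinearMap ∘ₗ (a ∘ₗ (S i).subtype).codRestrict (LinearMap.range L) hmem
  have hLF : ∀ y : S i, L (F y) = a y := fun y => he _
  have hFG : ∀ g (y : S i), F ⟨ρ g ↑y, hSW i g ↑y y.2⟩ = G g (F y) := by
    intro g y
    apply hL
    rw [hLF, hG, hLF, ha]
  have hzero : ∀ j, i ≠ j → ∀ y : S i, F y j = 0 := by
    intro j hij y
    have := equivariant_eq_zero ρ (hSW i) (hsimple i) (hsimple j) (hnoniso i j hij)
      (DFinsupp.lapply j ∘ₗ F) (by
        intro g y
        change ((F _ j : S j) : E) = ρ g (F y j)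
        rw [hFG]
        simp [G])
    exact LinearMap.congr_fun this y
  have hsingle : F ⟨x, hx⟩ = DFinsupp.single i (F ⟨x, hx⟩ i) := by
    ext j : 1
    by_cases hij : i = j
    · subst hij
      simp
    · rw [hzero j hij, DFinsupp.single_eq_of_ne (Ne.symm hij)]
  have : a x = (F ⟨x, hx⟩ i : E) := by
    rw [← hLF ⟨x, hx⟩, hsingle]
    simp [L]
  rw [this]
  exact Subtype.property _

end Schur

/-- A monic integer polynomial annihilating `A` also annihilates every eigenvalue. -/
theorem isIntegral_of_mulVec_eq {K : Type*} [Field K] {n : ℕ} (A : Matrix (Fin n) (Fin n) ℤ)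
    (μ : K) (u : Fin n → K) (hu : u ≠ 0)
    (h : (A.map ((↑) : ℤ → K)).mulVecLin u = μ • u) : IsIntegral ℤ μ := by
  have hA : IsIntegral ℤ (Matrix.toLin' (A.map ((↑) : ℤ → K))) := by
    have h1 : IsIntegral ℤ A := Matrix.isIntegral A
    have h2 := h1.map ((Int.castRingHom K).mapMatrix (m := Fin n)).toIntAlgHom
    exact h2.map (Matrix.toLinAlgEquiv' (R := K) (n := Fin n)).toRingEquiv.toRingHom.toIntAlgHom
  obtain ⟨p, hp, hpa⟩ := hA
  refine ⟨p, hp, ?_⟩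
  have hev : Module.End.HasEigenvector (Matrix.toLin' (A.map ((↑) : ℤ → K))) μ u :=
    ⟨Module.End.mem_eigenspace_iff.mpr h, hu⟩
  have := Module.End.aeval_apply_of_hasEigenvector (p := p.map (Int.castRingHom K)) hev
  have hz : Polynomial.aeval (Matrix.toLin' (A.map ((↑) : ℤ → K)))
      (p.map (Int.castRingHom K)) = 0 := by
    rw [Polynomial.aeval_def, Polynomial.eval₂_map, ← hpa]
    congr 1
    exact RingHom.ext_int _ _
  rw [hz, LinearMap.zero_apply, Polynomial.eval_map] at this
  have := (smul_eq_zero.mp this.symm).resolve_right hu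
  rw [← this]
  congr 1

/-- **Eigenvalue integrality principle.**
Let `K` be a field of characteristic zero, `A` an integer `n×n` matrix viewed as a
`K`-linear endomorphism of `K^n`, and `W` a finite group acting `K`-linearly on `K^n`,
commuting with `A`.  If `U ⊆ K^n` is a subspace invariant under `A` and under `W`,
and `U` is a direct sum of simple `K[W]`-submodules which are pairwise non-isomorphic
and each of which admits only scalar `K[W]`-endomorphisms, then the restriction of `A`
to `U` is diagonalizable over `K` and all of its eigenvalues are integral over `ℤ`. -/
theorem integrality_principle {K : Type*} [Field K] [CharZero K] {n : ℕ}
    (A : Matrix (Fin n) (Fin n) ℤ)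
    {W : Type*} [Group W] [Finite W]
    (ρ : W →* ((Fin n → K) →ₗ[K] (Fin n → K)))
    (hcomm : ∀ g : W,
      ρ g ∘ₗ (A.map ((↑) : ℤ → K)).mulVecLin = (A.map ((↑) : ℤ → K)).mulVecLin ∘ₗ ρ g)
    (U : Submodule K (Fin n → K))
    (hAU : ∀ x ∈ U, (A.map ((↑) : ℤ → K)).mulVecLin x ∈ U)
    (hWU : ∀ (g : W), ∀ x ∈ U, ρ g x ∈ U)
    {ι : Type*} [Fintype ι] (S : ι → Submodule K (Fin n → K))
    (hSU : ∀ i, S i ≤ U)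
    (hSW : ∀ i (g : W), ∀ x ∈ S i, ρ g x ∈ S i)
    (hindep : iSupIndep S)
    (hsup : (⨆ i, S i) = U)
    (hbot : ∀ i, S i ≠ ⊥)
    (hsimple : ∀ i, ∀ T : Submodule K (Fin n → K), T ≤ S i →
      (∀ (g : W), ∀ x ∈ T, ρ g x ∈ T) → T = ⊥ ∨ T = S i)
    (hnoniso : ∀ i₁ i₂, i₁ ≠ i₂ →
      ¬ ∃ e : (S i₁) ≃ₗ[K] (S i₂), ∀ (g : W) (x : S i₁),
        (e ⟨ρ g ↑x, hSW i₁ g ↑x x.2⟩ : Fin n → K) = ρ g ↑(e x))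
    (hschur : ∀ i (f : (S i) →ₗ[K] (S i)),
      (∀ (g : W) (x : S i), (f ⟨ρ g ↑x, hSW i g ↑x x.2⟩ : Fin n → K) = ρ g ↑(f x)) →
      ∃ c : K, ∀ x, f x = c • x) :
    (⨆ μ : K,
      Module.End.eigenspace (((A.map ((↑) : ℤ → K)).mulVecLin).restrict hAU) μ) = ⊤ ∧
    ∀ (μ : K) (u : Fin n → K), u ∈ U → u ≠ 0 →
      (A.map ((↑) : ℤ → K)).mulVecLin u = μ • u → IsIntegral ℤ μ := by
  have ha : ∀ g x, ρ g ((A.map ((↑) : ℤ → K)).mulVecLin x)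
      = (A.map ((↑) : ℤ → K)).mulVecLin (ρ g x) := fun g x => LinearMap.congr_fun (hcomm g) x
  have hpres := map_mem_summand ρ (A.map ((↑) : ℤ → K)).mulVecLin ha S
    (by rw [hsup]; exact hAU) hSW hindep hsimple hnoniso
  refine ⟨?_, fun μ u _ hu h => isIntegral_of_mulVec_eq A μ u hu h⟩
  apply Submodule.map_injective_of_injective U.injective_subtype
  rw [Submodule.map_subtype_top]
  refine le_antisymm (Submodule.map_subtype_le _ _) ?_
  conv_lhs => rw [← hsup]
  refine iSup_le fun i x hx => ?_
  obtain ⟨c, hc⟩ := hschur i (((A.map ((↑) : ℤ → K)).mulVecLin).restrict (hpres i))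
    (fun g y => (ha g y).symm)
  refine ⟨⟨x, hSU i hx⟩, Submodule.mem_iSup_of_mem c ?_, rfl⟩
  rw [Module.End.mem_eigenspace_iff]
  have hcx : (A.map ((↑) : ℤ → K)).mulVecLin x = c • x := congrArg Subtype.val (hc ⟨x, hx⟩)
  exact Subtype.ext hcx
end

section
/- For every n ≥ 1 and every k with 1 ≤ k ≤ n, the signed sum Σ_{w ∈ S_n} sgn(w)·noninv_k(w) equals: 1 if k = n; 1 if k = n−1 and n is odd; 0 if k = n−1 and n is even; and 0 if 1 ≤ k ≤ n−2. -/
open Finset Equiv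

/-- The permutation `w` is increasing on the set `s`. -/
abbrev IncOn {n : ℕ} (s : Finset (Fin n)) (w : Perm (Fin n)) : Prop :=
  ∀ a ∈ s, ∀ b ∈ s, a < b → w a < w b

/-- The sum of the signs of the permutations that increase on `s`. -/
def signSum {n : ℕ} (s : Finset (Fin n)) : ℤ :=
  ∑ w : Perm (Fin n) with IncOn s w, (Perm.sign w : ℤ)

lemma sum_sign_mul_noninv (n k : ℕ) :
    ∑ w : Perm (Fin n), (Perm.sign w : ℤ) * noninv n k w =
      ∑ s ∈ powersetCard k (univ : Finset (Fin n)), signSum s := by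
  simp only [noninv, signSum, card_filter, sum_filter, Nat.cast_sum, mul_sum]
  rw [sum_comm]
  simp

lemma signSum_eq_zero {n : ℕ} {s : Finset (Fin n)} {a b : Fin n} (hab : a ≠ b)
    (ha : a ∉ s) (hb : b ∉ s) : signSum s = 0 := by
  have fix : ∀ x ∈ s, swap a b x = x := fun x hx =>
    swap_apply_of_ne_of_ne (fun h => ha (h ▸ hx)) (fun h => hb (h ▸ hx))
  refine sum_involution (fun w _ => w * swap a b) ?_ ?_ ?_ ?_
  · intro w _
    simp [Perm.sign_swap hab]
  · intro w _ _ h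
    exact hab (swap_eq_one_iff.mp (mul_eq_left.mp h))
  · intro w hw
    simp only [mem_filter, mem_univ, true_and] at hw ⊢
    intro x hx y hy hxy
    simpa [fix x hx, fix y hy] using hw x hx y hy hxy
  · intro w _
    simp [mul_assoc]

lemma signSum_univ (n : ℕ) : signSum (univ : Finset (Fin n)) = 1 := by
  have h : (univ.filter fun w : Perm (Fin n) => IncOn univ w) = {1} := by
    ext w
    simp only [mem_filter, mem_univ, true_and, mem_singleton]
    constructor
    · intro hw
      have hmono : StrictMono w := fun a b => hw a (mem_univ a) b (mem_univ b)
      have := (StrictMono.range_inj hmono strictMono_id).mp (by simp [w.surjective.range_eq])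
      ext x
      simp [this]
    · rintro rfl a _ b _ hab
      simpa using hab
  simp [signSum, h]

/-- The permutation that moves the entry at position `i` to `j` and keeps the relative order of
all the others. -/
def moveTo {m : ℕ} (i j : Fin (m + 1)) : Perm (Fin (m + 1)) :=
  j.cycleRange⁻¹ * i.cycleRange

lemma moveTo_self {m : ℕ} (i j : Fin (m + 1)) : moveTo i j i = j := by
  simp [moveTo, Perm.inv_def]

lemma moveTo_succAbove {m : ℕ} (i j : Fin (m + 1)) (x : Fin m) :
    moveTo i j (i.succAbove x) = j.succAbove x := by
  simp [moveTo, Perm.inv_def]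

lemma sign_moveTo {m : ℕ} (i j : Fin (m + 1)) :
    (Perm.sign (moveTo i j) : ℤ) = (-1) ^ (i : ℕ) * (-1) ^ (j : ℕ) := by
  simp [moveTo, Fin.sign_cycleRange, mul_comm]

lemma incOn_compl_singleton_iff {m : ℕ} (i : Fin (m + 1)) (w : Perm (Fin (m + 1))) :
    IncOn {i}ᶜ w ↔ ∃ j, moveTo i j = w := by
  constructor
  · intro hw
    -- Both sides enumerate the complement of `w i` increasingly.
    have h : (fun x => w (i.succAbove x)) = (w i).succAbove := by
      refine (StrictMono.range_inj ?_ (Fin.strictMono_succAbove _)).mp ?_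
      · intro x y hxy
        exact hw _ (by simp) _ (by simp) (Fin.strictMono_succAbove i hxy)
      · rw [Fin.range_succAbove]
        change Set.range (w ∘ i.succAbove) = _
        rw [Set.range_comp, Fin.range_succAbove, Set.image_compl_eq w.bijective,
          Set.image_singleton]
    refine ⟨w i, Equiv.ext fun x => ?_⟩
    induction x using Fin.succAboveCases i with
    | x => exact moveTo_self _ _
    | p x => rw [moveTo_succAbove]; exact (congrFun h x).symm
  · rintro ⟨j, rfl⟩ a ha b hb hab
    obtain ⟨x, rfl⟩ := Fin.exists_succAbove_eq (by simpa using ha : a ≠ i)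
    obtain ⟨y, rfl⟩ := Fin.exists_succAbove_eq (by simpa using hb : b ≠ i)
    simpa [moveTo_succAbove] using hab

lemma signSum_compl_singleton {m : ℕ} (i : Fin (m + 1)) :
    signSum ({i}ᶜ : Finset (Fin (m + 1))) =
      ∑ j : Fin (m + 1), (-1 : ℤ) ^ (i : ℕ) * (-1) ^ (j : ℕ) := by
  have h : (univ.filter fun w : Perm (Fin (m + 1)) => IncOn {i}ᶜ w) =
      univ.image (moveTo i) := by
    ext w
    simp only [mem_filter, mem_univ, true_and, mem_image, incOn_compl_singleton_iff]
  rw [signSum, h, sum_image]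
  · exact sum_congr rfl fun j _ => sign_moveTo i j
  · intro j _ j' _ hj
    rw [← moveTo_self i j, hj, moveTo_self]

lemma powersetCard_eq_image_compl (m : ℕ) :
    powersetCard m (univ : Finset (Fin (m + 1))) = univ.image fun i => {i}ᶜ := by
  ext s
  simp only [mem_powersetCard_univ, mem_image, mem_univ, true_and]
  constructor
  · intro hs
    obtain ⟨i, hi⟩ := card_eq_one.mp (show sᶜ.card = 1 by simp [card_compl, hs])
    exact ⟨i, by rw [← hi, compl_compl]⟩
  · rintro ⟨i, rfl⟩
    simp [card_compl]

lemma sum_sign_mul_noninv_pred (m : ℕ) :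
    ∑ w : Perm (Fin (m + 1)), (Perm.sign w : ℤ) * noninv (m + 1) m w =
      if Even (m + 1) then 0 else 1 := by
  rw [sum_sign_mul_noninv, powersetCard_eq_image_compl, sum_image]
  · simp only [signSum_compl_singleton, ← mul_sum, ← sum_mul]
    rw [Fin.sum_univ_eq_sum_range (fun i => (-1 : ℤ) ^ i), neg_one_geom_sum]
    split_ifs <;> simp
  · intro i _ j _ hij
    simpa using hij

/-- The signed sum `Σ_{w ∈ S_n} sgn(w)·noninv_k(w)` equals `1` if `k = n`,
`1` if `k = n−1` and `n` is odd, `0` if `k = n−1` and `n` is even, and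
`0` if `1 ≤ k ≤ n−2`. -/
theorem signed_sum_noninv (n k : ℕ) (hn : 1 ≤ n) (hk1 : 1 ≤ k) (hkn : k ≤ n) :
    (k = n → ∑ w : Equiv.Perm (Fin n), (Equiv.Perm.sign w : ℤ) * noninv n k w = 1) ∧
    (k = n - 1 → Odd n → ∑ w : Equiv.Perm (Fin n), (Equiv.Perm.sign w : ℤ) * noninv n k w = 1) ∧
    (k = n - 1 → Even n → ∑ w : Equiv.Perm (Fin n), (Equiv.Perm.sign w : ℤ) * noninv n k w = 0) ∧
    (k ≤ n - 2 → ∑ w : Equiv.Perm (Fin n), (Equiv.Perm.sign w : ℤ) * noninv n k w = 0) := by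
  obtain ⟨m, rfl⟩ : ∃ m, n = m + 1 := ⟨n - 1, by omega⟩
  refine ⟨?_, ?_, ?_, ?_⟩
  · rintro rfl
    have h : powersetCard (m + 1) (univ : Finset (Fin (m + 1))) = {univ} := by
      simpa using powersetCard_self (univ : Finset (Fin (m + 1)))
    rw [sum_sign_mul_noninv, h, sum_singleton, signSum_univ]
  · rintro rfl hodd
    simpa [Nat.not_even_iff_odd.mpr hodd] using sum_sign_mul_noninv_pred k
  · rintro rfl heven
    simpa [heven] using sum_sign_mul_noninv_pred k
  · intro hk
    rw [sum_sign_mul_noninv]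
    refine sum_eq_zero fun s hs => ?_
    rw [mem_powersetCard_univ] at hs
    have hc : 1 < sᶜ.card := by
      rw [card_compl, hs, Fintype.card_fin]
      -- `1 ≤ k` excludes the truncated value `n - 2 = 0` at `n = 1`.
      omega
    obtain ⟨a, ha, b, hb, hab⟩ := one_lt_card.mp hc
    exact signSum_eq_zero hab (mem_compl.mp ha) (mem_compl.mp hb)
end

section
/- Fix n ≥ 1 and 1 ≤ k ≤ n, and let T_k = { y ∈ S_n : y⁻¹(1) < y⁻¹(2) < ⋯ < y⁻¹(k) } be the set of permutations in whose one-line word the letters 1, 2, …, k appear from left to right in increasing order. Then for every w ∈ S_n one has (n−k)! · noninv_k(w) = #{ (u,v) ∈ T_k × T_k : u⁻¹∘v = w }. -/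
/-- The pointwise stabilizer of the first `k` points of `Fin (k + m)` has `m!` elements. -/
lemma card_perm_fix_prefix (k m : ℕ) :
    (Finset.univ.filter (fun g : Equiv.Perm (Fin (k + m)) =>
      ∀ i : Fin k, g (Fin.castAdd m i) = Fin.castAdd m i)).card = m.factorial := by
  have h := Fintype.card_congr
    (Equiv.Perm.subtypeEquivSubtypePerm (fun a : Fin (k + m) => k ≤ (a : ℕ)))
  rw [Fintype.card_perm] at h
  have hc : Fintype.card {a : Fin (k + m) // k ≤ (a : ℕ)} = m := by
    have e : Fin m ≃ {a : Fin (k + m) // k ≤ (a : ℕ)} :=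
      { toFun := fun i => ⟨Fin.natAdd k i, by simp⟩
        invFun := fun a => ⟨a.1 - k, by have := a.1.2; have := a.2; omega⟩
        left_inv := fun i => by ext; simp
        right_inv := fun a => by
          have := a.2
          ext; simp; omega }
    rw [← Fintype.card_congr e, Fintype.card_fin]
  rw [hc] at h
  rw [h, Fintype.card_subtype]
  congr 1
  ext g
  simp only [Finset.mem_filter, Finset.mem_univ, true_and, not_le]
  constructor
  · intro hg a ha
    exact hg ⟨a, ha⟩
  · intro hg i
    exact hg _ (by simp)

/-- The permutations of `Fin (k + m)` whose first `k` values enumerate `s` increasingly number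
`m!`: they form a left coset of the pointwise stabilizer of the first `k` points. -/
lemma card_perm_prefix_eq (k m : ℕ) (s : Finset (Fin (k + m))) (hs : s.card = k) :
    (Finset.univ.filter (fun y : Equiv.Perm (Fin (k + m)) =>
      ∀ i : Fin k, y (Fin.castAdd m i) = s.orderEmbOfFin hs i)).card = m.factorial := by
  have hsc : sᶜ.card = m := by
    rw [Finset.card_compl, hs, Fintype.card_fin]; omega
  -- the base point of the coset: list `s` increasingly, then its complement increasingly
  let y₀ : Equiv.Perm (Fin (k + m)) := finSumFinEquiv.symm.trans (finSumEquivOfFinset hs hsc)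
  have hy₀ : ∀ i : Fin k, y₀ (Fin.castAdd m i) = s.orderEmbOfFin hs i := by
    intro i
    simp [y₀]
  rw [← card_perm_fix_prefix k m]
  refine Finset.card_nbij' (fun y => y₀⁻¹ * y) (fun g => y₀ * g) ?_ ?_ ?_ ?_
  · intro y hy
    simp only [Finset.coe_filter, Finset.mem_univ, true_and, Set.mem_ofPred_eq] at hy ⊢
    intro i
    rw [Equiv.Perm.mul_apply, hy, Equiv.Perm.inv_eq_iff_eq, hy₀]
  · intro g hg
    simp only [Finset.coe_filter, Finset.mem_univ, true_and, Set.mem_ofPred_eq] at hg ⊢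
    intro i
    rw [Equiv.Perm.mul_apply, hg, hy₀]
  · intro y _
    simp
  · intro g _
    simp

/-- The defining condition of `T_k`, stated for `z = y⁻¹`, is strict monotonicity of the first `k`
values of `z`. -/
lemma prefix_increasing_iff (k m : ℕ) (z : Fin (k + m) → Fin (k + m)) :
    (∀ a b : Fin (k + m), (a : ℕ) < k → (b : ℕ) < k → a < b → z a < z b) ↔
      StrictMono (fun i : Fin k => z (Fin.castAdd m i)) := by
  constructor
  · intro h i j hij
    exact h _ _ (by simp) (by simp) hij
  · intro h a b ha hb hab
    exact @h ⟨a, ha⟩ ⟨b, hb⟩ hab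

/-- Permutations `y` with `y` and `w ∘ y` increasing on the first `k` positions, counted by the
set of values on those positions. -/
lemma card_prefix_increasing (k m : ℕ) (w : Equiv.Perm (Fin (k + m))) :
    (Finset.univ.filter (fun y : Equiv.Perm (Fin (k + m)) =>
      StrictMono (fun i : Fin k => y (Fin.castAdd m i)) ∧
      StrictMono (fun i : Fin k => w (y (Fin.castAdd m i))))).card
      = m.factorial * noninv (k + m) k w := by
  classical
  rw [Finset.card_eq_sum_card_fiberwise
    (f := fun y => Finset.univ.image (fun i : Fin k => y (Fin.castAdd m i)))
    (t := (Finset.powersetCard k (Finset.univ : Finset (Fin (k + m)))).filter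
      (fun s => ∀ a ∈ s, ∀ b ∈ s, a < b → w a < w b))]
  · rw [Finset.sum_const_nat (m := m.factorial), noninv, mul_comm]
    intro s hs
    rw [Finset.mem_filter, Finset.mem_powersetCard] at hs
    obtain ⟨⟨-, hcard⟩, hw⟩ := hs
    rw [← card_perm_prefix_eq k m s hcard]
    congr 1
    ext y
    simp only [Finset.mem_filter, Finset.mem_univ, true_and]
    constructor
    · rintro ⟨⟨hy, -⟩, rfl⟩ i
      exact congrFun (Finset.orderEmbOfFin_unique hcard
        (fun x => Finset.mem_image_of_mem _ (Finset.mem_univ x)) hy) i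
    · intro h
      have hf : (fun i : Fin k => y (Fin.castAdd m i)) = s.orderEmbOfFin hcard := funext h
      refine ⟨⟨?_, ?_⟩, ?_⟩
      · rw [hf]; exact (s.orderEmbOfFin hcard).strictMono
      · intro i j hij
        simp only [h]
        exact hw _ (Finset.orderEmbOfFin_mem s hcard i) _ (Finset.orderEmbOfFin_mem s hcard j)
          ((s.orderEmbOfFin hcard).strictMono hij)
      · rw [hf]
        exact Finset.image_orderEmbOfFin_univ s hcard
  · intro y hy
    simp only [Finset.coe_filter, Finset.mem_univ, true_and, Set.mem_ofPred_eq] at hy ⊢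
    obtain ⟨hy, hwy⟩ := hy
    refine ⟨?_, ?_⟩
    · rw [Finset.mem_powersetCard]
      exact ⟨Finset.subset_univ _, by
        rw [Finset.card_image_of_injective _ hy.injective, Finset.card_univ, Fintype.card_fin]⟩
    · intro a ha b hb hab
      obtain ⟨i, -, rfl⟩ := Finset.mem_image.1 ha
      obtain ⟨j, -, rfl⟩ := Finset.mem_image.1 hb
      exact hwy (hy.lt_iff_lt.1 hab)


/-- With `T_k` the set of permutations in whose one-line word the first `k` letters
appear from left to right in increasing order, one has
`(n−k)! · noninv_k(w) = #{ (u,v) ∈ T_k × T_k : u⁻¹∘v = w }`. -/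
theorem noninv_factorization (n k : ℕ) (hn : 1 ≤ n) (hk1 : 1 ≤ k) (hkn : k ≤ n)
    (w : Equiv.Perm (Fin n)) :
    (n - k).factorial * noninv n k w =
      (((Finset.univ.filter (fun y : Equiv.Perm (Fin n) =>
            ∀ a b : Fin n, (a : ℕ) < k → (b : ℕ) < k → a < b → y⁻¹ a < y⁻¹ b)) ×ˢ
        (Finset.univ.filter (fun y : Equiv.Perm (Fin n) =>
            ∀ a b : Fin n, (a : ℕ) < k → (b : ℕ) < k → a < b → y⁻¹ a < y⁻¹ b))).filter
        (fun p => p.1⁻¹ * p.2 = w)).card := by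
  obtain ⟨m, rfl⟩ := Nat.exists_eq_add_of_le hkn
  rw [Nat.add_sub_cancel_left, ← card_prefix_increasing]
  symm
  refine Finset.card_nbij' (fun p => p.2⁻¹) (fun y => (y⁻¹ * w⁻¹, y⁻¹)) ?_ ?_ ?_ ?_
  · rintro ⟨u, v⟩ hp
    simp only [Finset.coe_filter, Finset.mem_product, Finset.mem_filter, Finset.mem_univ, true_and,
      Set.mem_ofPred_eq, prefix_increasing_iff] at hp ⊢
    obtain ⟨⟨hu, hv⟩, rfl⟩ := hp
    exact ⟨hv, by simpa using hu⟩
  · intro y hy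
    simp only [Finset.coe_filter, Finset.mem_product, Finset.mem_filter, Finset.mem_univ, true_and,
      Set.mem_ofPred_eq, prefix_increasing_iff] at hy ⊢
    exact ⟨⟨by simpa using hy.2, by simpa using hy.1⟩, by group⟩
  · rintro ⟨u, v⟩ hp
    simp only [Finset.coe_filter, Set.mem_ofPred_eq] at hp
    rw [← hp.2]
    simp
  · intro y _
    simp
end

section
/- Let G be a finite group, U a subgroup of G, and χ : U → ℂˣ a group homomorphism taking only the values ±1 (so χ(u⁻¹) = χ(u) for all u ∈ U). Let e = (1/|U|)·Σ_{u∈U} χ(u)·u ∈ ℂ[G]. Suppose that for every g ∈ G with e·g·e ≠ 0, the double coset UgU contains an involution, i.e., an element t with t = t⁻¹. Then the subalgebra e·ℂ[G]·e is commutative: x·y = y·x for all x, y ∈ e·ℂ[G]·e. -/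
/-!
Inversion `g ↦ g⁻¹` extends linearly to an anti-automorphism `ι` of `ℂ[G]`, encoded here as an
algebra homomorphism `ℂ[G] → ℂ[G]ᵐᵒᵖ`. Since `χ = χ⁻¹`, it fixes `e`. It also fixes each `e g e`:
if `e g e = 0` this is trivial, and otherwise, since `e u = u e = χ(u) e` for `u ∈ U`, the
element `e g e` agrees up to a sign with `e t e` for an involution `t ∈ UgU`, which `ι` fixes.
By linearity `ι` is the identity on `e ℂ[G] e`, so for `x, y` in it,
`x y = ι(x y) = ι(y) ι(x) = y x`.
-/

open MulOpposite in
/-- The anti-automorphism of `ℂ[G]` induced by inversion on `G`, as a homomorphism to the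
opposite algebra. -/
noncomputable def inversionAntiHom (G : Type*) [Group G] :
    MonoidAlgebra ℂ G →ₐ[ℂ] (MonoidAlgebra ℂ G)ᵐᵒᵖ :=
  MonoidAlgebra.lift ℂ (MonoidAlgebra ℂ G)ᵐᵒᵖ G
    { toFun := fun g => op (MonoidAlgebra.single g⁻¹ 1)
      map_one' := by simp [MonoidAlgebra.one_def]
      map_mul' := fun a b => by
        rw [← op_mul, MonoidAlgebra.single_mul_single, mul_inv_rev, one_mul] }

lemma inversionAntiHom_single {G : Type*} [Group G] (g : G) (c : ℂ) :
    inversionAntiHom G (MonoidAlgebra.single g c) =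
      MulOpposite.op (MonoidAlgebra.single g⁻¹ c) := by
  simp [inversionAntiHom, MonoidAlgebra.lift_single, ← MulOpposite.op_smul]

/-- **Twisted version of Gelfand's trick.**
Let `G` be a finite group, `U` a subgroup, `χ : U → ℂˣ` a linear character taking only
values `±1`, and `e = (1/|U|)·Σ_{u∈U} χ(u)·u ∈ ℂ[G]`.  If every double coset `UgU` with
`e·g·e ≠ 0` contains an involution `t = t⁻¹`, then the algebra `e·ℂ[G]·e` is
commutative. -/
theorem twisted_gelfand_trick {G : Type*} [Group G] [Fintype G]
    (U : Subgroup G) (χ : U →* ℂˣ)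
    (hχ : ∀ u : U, (χ u : ℂ) = 1 ∨ (χ u : ℂ) = -1)
    (e : MonoidAlgebra ℂ G)
    (he : e = (Nat.card U : ℂ)⁻¹ • ∑ᶠ u : U, MonoidAlgebra.single (u : G) ((χ u : ℂ)))
    (hinv : ∀ g : G, e * MonoidAlgebra.single g 1 * e ≠ 0 →
      ∃ u₁ u₂ : U, ((u₁ : G) * g * (u₂ : G)) = ((u₁ : G) * g * (u₂ : G))⁻¹) :
    ∀ x y : MonoidAlgebra ℂ G,
      (∃ a, x = e * a * e) → (∃ b, y = e * b * e) → x * y = y * x := by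
  classical
  have hsq : ∀ u : U, (χ u : ℂ) * χ u = 1 := fun u => by
    rcases hχ u with h | h <;> simp [h]
  have hχinv : ∀ u : U, (χ u⁻¹ : ℂ) = χ u := fun u => by
    rw [map_inv, Units.val_inv_eq_inv_val]
    exact (eq_inv_of_mul_eq_one_left (hsq u)).symm
  rw [finsum_eq_sum_of_fintype] at he
  have heR : ∀ u : U, e * MonoidAlgebra.single (u : G) 1 = (χ u : ℂ) • e := fun u => by
    rw [he, smul_mul_assoc, smul_comm]
    congr 1
    rw [Finset.sum_mul, Finset.smul_sum]
    refine Fintype.sum_equiv (Equiv.mulRight u) _ _ fun v => ?_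
    simp only [Equiv.coe_mulRight, MonoidAlgebra.single_mul_single, map_mul, Units.val_mul,
      Subgroup.coe_mul, MonoidAlgebra.smul_single, smul_eq_mul, mul_one]
    rw [mul_left_comm, hsq, mul_one]
  have heL : ∀ u : U, MonoidAlgebra.single (u : G) 1 * e = (χ u : ℂ) • e := fun u => by
    rw [he, mul_smul_comm, smul_comm]
    congr 1
    rw [Finset.mul_sum, Finset.smul_sum]
    refine Fintype.sum_equiv (Equiv.mulLeft u) _ _ fun v => ?_
    simp only [Equiv.coe_mulLeft, MonoidAlgebra.single_mul_single, map_mul, Units.val_mul,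
      Subgroup.coe_mul, MonoidAlgebra.smul_single, smul_eq_mul, one_mul]
    rw [← mul_assoc, hsq, one_mul]
  have hιe : inversionAntiHom G e = MulOpposite.op e := by
    rw [he, map_smul, map_sum, MulOpposite.op_smul, Finset.op_sum]
    congr 1
    refine Fintype.sum_equiv (Equiv.inv U) _ _ fun v => ?_
    rw [inversionAntiHom_single, Equiv.inv_apply, hχinv, Subgroup.coe_inv]
  have hιg : ∀ g : G, inversionAntiHom G (e * MonoidAlgebra.single g 1 * e) =
      MulOpposite.op (e * MonoidAlgebra.single g 1 * e) := fun g => by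
    by_cases h0 : e * MonoidAlgebra.single g 1 * e = 0
    · simp [h0]
    obtain ⟨u₁, u₂, ht⟩ := hinv g h0
    set t := (u₁ : G) * g * (u₂ : G) with htdef
    have hιt : inversionAntiHom G (e * MonoidAlgebra.single t 1 * e) =
        MulOpposite.op (e * MonoidAlgebra.single t 1 * e) := by
      rw [map_mul, map_mul, hιe, inversionAntiHom_single, ← ht, ← MulOpposite.op_mul,
        ← MulOpposite.op_mul, mul_assoc]
    have het : e * MonoidAlgebra.single t 1 * e =
        ((χ u₁ : ℂ) * χ u₂) • (e * MonoidAlgebra.single g 1 * e) := by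
      have : (MonoidAlgebra.single t 1 : MonoidAlgebra ℂ G) = MonoidAlgebra.single (u₁ : G) 1 *
          MonoidAlgebra.single g 1 * MonoidAlgebra.single (u₂ : G) 1 := by
        simp [MonoidAlgebra.single_mul_single, htdef]
      rw [this, ← mul_assoc, ← mul_assoc, heR, mul_assoc _ _ e, heL, mul_smul_comm,
        smul_mul_assoc, smul_mul_assoc, smul_smul, mul_comm (χ u₂ : ℂ)]
    have heg : e * MonoidAlgebra.single g 1 * e =
        ((χ u₁ : ℂ) * χ u₂) • (e * MonoidAlgebra.single t 1 * e) := by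
      rw [het, smul_smul, mul_mul_mul_comm, hsq, hsq, one_mul, one_smul]
    rw [heg, map_smul, hιt, MulOpposite.op_smul]
  have hι : ∀ a : MonoidAlgebra ℂ G, inversionAntiHom G (e * a * e) =
      MulOpposite.op (e * a * e) := fun a => by
    induction a using MonoidAlgebra.induction_on with
    | of g => exact hιg g
    | add a b ha hb => rw [mul_add, add_mul, map_add, ha, hb, MulOpposite.op_add]
    | smul r a ha => rw [mul_smul_comm, smul_mul_assoc, map_smul, ha, MulOpposite.op_smul]
  rintro x y ⟨a, rfl⟩ ⟨b, rfl⟩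
  have hxy := hι (a * e * e * b)
  have hassoc : e * (a * e * e * b) * e = e * a * e * (e * b * e) := by
    simp only [mul_assoc]
  rw [hassoc, map_mul, hι, hι, ← MulOpposite.op_mul] at hxy
  exact (MulOpposite.op_injective hxy).symm
end
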